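/- arXiv:2002.02727 — 3 statements merged into one kernel-verified Lean document; each statement's English description precedes it below -/
import Mathlib

section
/- Let σ : A → B be a flat local homomorphism of Noetherian local commutative rings, with m the maximal ideal of A. Assume the formal fibers of A are geometrically reduced, i.e. for every prime ideal p of A the fiber κ(p)⊗_A Â of the completion map A → Â is geometrically reduced over the residue field κ(p). If the closed fiber B/mB is geometrically reduced over A/m, then σ is a reduced homomorphism, i.e. for every prime ideal p of A the fiber B⊗_A κ(p) is geometrically reduced over κ(p). -/
open TensorProduct IsLocalRing

universe u v

/-- An algebra `R` over a field `F` is geometrically reduced if `L ⊗[F] R` is reduced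
for every finite field extension `L` of `F`. -/
def GeometricallyReduced (F : Type u) (R : Type v) [Field F] [CommRing R]
    [Algebra F R] : Prop :=
  ∀ (L : Type u) [Field L] [Algebra F L] [FiniteDimensional F L], IsReduced (L ⊗[F] R)

theorem aux_le_radical {T : Type u} [CommRing T] [IsDomain T] [IsNoetherianRing T] (I : Ideal T)
    (hI : ∀ M : Ideal T, M.IsMaximal → I ≤ M) (y : T) (hy : y ≠ 0)
    (hP : ∀ q : Ideal T, q.IsPrime → q ≠ ⊥ → y ∈ q) : I ≤ (Ideal.span {y}).radical := by
  rw [Ideal.radical_eq_sInf]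
  refine le_sInf ?_
  rintro q₀ ⟨hq₀, hq₀p⟩
  obtain ⟨q, hq, hqle⟩ := Ideal.exists_minimalPrimes_le hq₀
  refine le_trans ?_ hqle
  have hqp : q.IsPrime := hq.1.1
  obtain ⟨M, hM, hqM⟩ := Ideal.exists_le_maximal q hqp.ne_top
  suffices h : M ≤ q by exact (hI M hM).trans h
  by_contra hMq
  have hfin : (Ideal.span {y}).minimalPrimes.Finite :=
    (Ideal.span {y}).finite_minimalPrimes_of_isNoetherianRing
  have hnot : ¬ ((M : Set T) ⊆ ⋃ i ∈ (Ideal.span {y}).minimalPrimes, (i : Set T)) := by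
    rw [Ideal.subset_union_prime_finite hfin ⊥ ⊥ (fun i hi _ _ => hi.1.1)]
    rintro ⟨q', hq', hle⟩
    exact hMq (hle.trans (hq'.2 hq.1 (hqM.trans hle)))
  rw [Set.not_subset] at hnot
  obtain ⟨w, hwM, hw⟩ := hnot
  simp only [Set.mem_iUnion, not_exists] at hw
  have hw0 : w ≠ 0 := by
    rintro rfl
    exact hw q hq q.zero_mem
  obtain ⟨q', hq', -⟩ := Ideal.exists_minimalPrimes_le (I := Ideal.span {w}) (J := M)
    ((Ideal.span_singleton_le_iff_mem _).mpr hwM)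
  have hq'p : q'.IsPrime := hq'.1.1
  have hwq' : w ∈ q' := hq'.1.2 (Ideal.mem_span_singleton_self w)
  have hyq' : y ∈ q' := hP q' hq'p (by rintro rfl; exact hw0 (by simpa using hwq'))
  obtain ⟨q'', hq'', hle⟩ := Ideal.exists_minimalPrimes_le (I := Ideal.span {y}) (J := q')
    ((Ideal.span_singleton_le_iff_mem _).mpr hyq')
  have hq''p : q''.IsPrime := hq''.1.1
  have hyq'' : y ∈ q'' := hq''.1.2 (Ideal.mem_span_singleton_self y)
  have hlt : q'' < q' := lt_of_le_of_ne hle (by rintro rfl; exact hw _ hq'' hwq')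
  have h0 : (⊥ : Ideal T) < q'' := bot_lt_iff_ne_bot.mpr (by rintro rfl; exact hy (by simpa using hyq''))
  have hh : q'.height ≤ 1 := Ideal.height_le_one_of_isPrincipal_of_mem_minimalPrimes _ q' hq'
  have hb : (⊥ : Ideal T).IsPrime := Ideal.isPrime_bot
  have h1 := Ideal.height_add_one_le_of_lt_of_isPrime h0
  have h2 := Ideal.height_add_one_le_of_lt_of_isPrime hlt
  have : (1 : ℕ∞) + 1 ≤ 1 := by
    calc (1 : ℕ∞) + 1 ≤ q''.height + 1 := by gcongr; exact le_trans (by simp) h1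
      _ ≤ q'.height := h2
      _ ≤ 1 := hh
  exact absurd this (by decide)

/-- the valuative integral closure of `I ^ k`. -/
def valClosure {S : Type u} [CommRing S] (I : Ideal S) (k : ℕ) : Ideal S where
  carrier := {x | ∀ (V : Type u) [CommRing V] [IsDomain V] [ValuationRing V] (φ : S →+* V),
    I.map φ ≤ maximalIdeal V → φ x ∈ (I ^ k).map φ}
  add_mem' := fun ha hb V _ _ _ φ h => by
    rw [map_add]; exact Ideal.add_mem _ (ha V φ h) (hb V φ h)
  zero_mem' := fun V _ _ _ φ h => by simp
  smul_mem' := fun c x hx V _ _ _ φ h => by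
    rw [smul_eq_mul, map_mul]; exact Ideal.mul_mem_left _ _ (hx V φ h)

theorem pow_le_valClosure {S : Type u} [CommRing S] (I : Ideal S) (k : ℕ) :
    I ^ k ≤ valClosure I k := fun _ hx _ _ _ _ φ _ => Ideal.mem_map_of_mem φ hx

theorem valClosure_antitone {S : Type u} [CommRing S] (I : Ideal S) : Antitone (valClosure I) :=
  fun _ _ hab _ hx V _ _ _ φ h => Ideal.map_mono (Ideal.pow_le_pow_right hab) (hx V φ h)

theorem valClosure_map {D S : Type u} [CommRing D] [CommRing S] (f : D →+* S) (I : Ideal D) (k : ℕ)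
    {x : D} (hx : x ∈ valClosure I k) : f x ∈ valClosure (I.map f) k := by
  intro V _ _ _ φ h
  rw [Ideal.map_map] at h
  have := hx V (φ.comp f) h
  rwa [← Ideal.map_pow, Ideal.map_map]

theorem exists_notMem_valClosure {S : Type u} [CommRing S] [IsNoetherianRing S] [IsReduced S]
    (I : Ideal S) (hI : ∀ M : Ideal S, M.IsMaximal → I ≤ M) (x : S) (hx : x ≠ 0) :
    ∃ k, x ∉ valClosure I k := by
  have hne : {P : Ideal S | P.IsPrime ∧ x ∉ P}.Nonempty := by
    by_contra h
    apply hx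
    rw [Set.not_nonempty_iff_eq_empty, Set.eq_empty_iff_forall_notMem] at h
    have : x ∈ nilradical S := by
      rw [mem_nilradical, nilpotent_iff_mem_prime]
      intro J hJ
      by_contra hc
      exact h J ⟨hJ, hc⟩
    simpa using this
  obtain ⟨P, ⟨hP, hxP⟩, hmax⟩ := WellFounded.has_min
    (wellFounded_gt (α := Ideal S)) _ hne
  let T := S ⧸ P
  let y : T := Ideal.Quotient.mk P x
  have hy : y ≠ 0 := fun h => hxP (Ideal.Quotient.eq_zero_iff_mem.mp h)
  have hIT : ∀ M : Ideal T, M.IsMaximal → I.map (Ideal.Quotient.mk P) ≤ M := by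
    intro M hM
    rw [Ideal.map_le_iff_le_comap]
    exact hI _ (Ideal.comap_isMaximal_of_surjective _ Ideal.Quotient.mk_surjective)
  have hrad := aux_le_radical (I.map (Ideal.Quotient.mk P)) hIT y hy (by
    intro q hq hq0
    by_contra hyq
    have hlt : P < q.comap (Ideal.Quotient.mk P) := by
      refine lt_of_le_of_ne ?_ ?_
      · intro a ha
        rw [Ideal.mem_comap, Ideal.Quotient.eq_zero_iff_mem.mpr ha]; exact q.zero_mem
      · intro he
        apply hq0
        rw [eq_bot_iff]
        intro z hz
        obtain ⟨z, rfl⟩ := Ideal.Quotient.mk_surjective z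
        have : z ∈ P := by rw [he]; exact hz
        simpa using Ideal.Quotient.eq_zero_iff_mem.mpr this
    exact hmax (q.comap (Ideal.Quotient.mk P)) ⟨hq.comap _, hyq⟩ hlt)
  obtain ⟨j, hj⟩ := Ideal.exists_pow_le_of_le_radical_of_fg hrad (IsNoetherian.noetherian _)
  obtain ⟨M, hM⟩ := Ideal.exists_maximal T
  let K := FractionRing T
  let g : Localization.AtPrime M →+* K :=
    IsLocalization.lift (M := M.primeCompl) (g := algebraMap T K) (by
      rintro ⟨z, hz⟩
      apply IsUnit.mk0
      simp only [ne_eq, FaithfulSMul.algebraMap_eq_zero_iff]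
      rintro rfl
      exact hz M.zero_mem)
  obtain ⟨V, h, hloc⟩ := IsLocalRing.exists_factor_valuationRing g
  let g' : Localization.AtPrime M →+* V := g.codRestrict V.toSubring h
  have hloc' : IsLocalHom g' := hloc
  let φ₀ : T →+* V := g'.comp (algebraMap T (Localization.AtPrime M))
  let φ : S →+* V := φ₀.comp (Ideal.Quotient.mk P)
  have hφ : I.map φ ≤ maximalIdeal V := by
    rw [Ideal.map_le_iff_le_comap]
    intro a ha
    have h1 : Ideal.Quotient.mk P a ∈ M := hIT M hM (Ideal.mem_map_of_mem _ ha)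
    have h2 : algebraMap T (Localization.AtPrime M) (Ideal.Quotient.mk P a) ∈ maximalIdeal _ :=
      (IsLocalization.AtPrime.to_map_mem_maximal_iff _ M _).mpr h1
    have h5 : maximalIdeal _ ≤ (maximalIdeal V).comap g' :=
      ((local_hom_TFAE g').out 0 3).mp hloc'
    exact h5 h2
  have hφ0 : φ₀ y ≠ 0 := by
    intro h0
    have : ((φ₀ y : V) : K) = algebraMap T K y := by
      change g (algebraMap T _ y) = _
      exact IsLocalization.lift_eq _ _
    rw [h0] at this
    exact hy ((FaithfulSMul.algebraMap_eq_zero_iff T K).mp this.symm)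
  refine ⟨j + 1, fun hmem => ?_⟩
  have h3 : φ₀ y ∈ (I ^ (j + 1)).map φ := hmem V φ hφ
  have h4 : (I ^ (j + 1)).map φ ≤ Ideal.span {φ₀ y} * maximalIdeal V := by
    rw [pow_succ, Ideal.map_mul]
    refine Ideal.mul_mono ?_ hφ
    rw [← Ideal.map_pow] at hj
    have := Ideal.map_mono (f := φ₀) hj
    rwa [Ideal.map_map, Ideal.map_span, Set.image_singleton] at this
  obtain ⟨w, hw, hw'⟩ := Ideal.mem_span_singleton_mul.mp (h4 h3)
  have : w = 1 := mul_left_cancel₀ hφ0 (by rw [hw', mul_one])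
  subst this
  exact (Ideal.ne_top_iff_one _).mp (maximalIdeal.isMaximal V).ne_top hw

theorem aux_one_tmul_eq_zero {D : Type*} {E : Type*} [CommRing D] [CommRing E] [Algebra D E]
    (J : Ideal D) (b : E) : (1 : D ⧸ J) ⊗ₜ[D] b = 0 ↔ b ∈ J.map (algebraMap D E) := by
  rw [← (TensorProduct.quotTensorEquivQuotSMul E J).map_eq_zero_iff]
  have : TensorProduct.quotTensorEquivQuotSMul E J ((1 : D ⧸ J) ⊗ₜ[D] b) =
      Submodule.Quotient.mk b := by
    simpa using TensorProduct.quotTensorEquivQuotSMul_mk_tmul J (1 : D) b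
  rw [this, Submodule.Quotient.mk_eq_zero, Ideal.smul_top_eq_map]
  rfl

theorem aux_mem_map_ker {D : Type*} {E : Type*} [CommRing D] [CommRing E] [Algebra D E]
    [Module.Flat D E] {W : Type*} [AddCommGroup W] [Module D W] (f : D →ₗ[D] W) (b : E)
    (h : f 1 ⊗ₜ[D] b = 0) : b ∈ Ideal.map (algebraMap D E) (LinearMap.ker f) := by
  rw [← aux_one_tmul_eq_zero]
  let g : (D ⧸ LinearMap.ker f) →ₗ[D] W := (LinearMap.ker f).liftQ f le_rfl
  have hg : Function.Injective g := by
    rw [← LinearMap.ker_eq_bot]; exact Submodule.ker_liftQ_eq_bot _ _ _ le_rfl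
  apply Module.Flat.rTensor_preserves_injective_linearMap (M := E) g hg
  rw [map_zero, ← h, LinearMap.rTensor_tmul]
  rfl

theorem aux_mem_map_inf {D : Type*} {E : Type*} [CommRing D] [CommRing E] [Algebra D E]
    [Module.Flat D E] (J₁ J₂ : Ideal D) (b : E) (h₁ : b ∈ J₁.map (algebraMap D E))
    (h₂ : b ∈ J₂.map (algebraMap D E)) : b ∈ (J₁ ⊓ J₂).map (algebraMap D E) := by
  let f : D →ₗ[D] (D ⧸ J₁) × (D ⧸ J₂) := LinearMap.prod (Submodule.mkQ J₁) (Submodule.mkQ J₂)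
  have hf : LinearMap.ker f = J₁ ⊓ J₂ := by
    simp only [f, LinearMap.ker_prod, Submodule.ker_mkQ]
  rw [← hf]
  apply aux_mem_map_ker
  have e : f 1 = LinearMap.inl D (D ⧸ J₁) (D ⧸ J₂) 1 + LinearMap.inr D (D ⧸ J₁) (D ⧸ J₂) 1 := by
    simp [f]
  rw [e, TensorProduct.add_tmul, ← LinearMap.rTensor_tmul, ← LinearMap.rTensor_tmul,
    (aux_one_tmul_eq_zero J₁ b).mpr h₁, (aux_one_tmul_eq_zero J₂ b).mpr h₂]
  simp

theorem nilpotent_mem_valClosure {D : Type u} {E : Type v} [CommRing D] [CommRing E] [Algebra D E]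
    [IsNoetherianRing D] [Module.Flat D E] (I : Ideal D) (hart : ∀ k, IsArtinianRing (D ⧸ I ^ k))
    (hred : ∀ (V : Type u) [CommRing V] [IsDomain V] [ValuationRing V] [Algebra D V],
      I.map (algebraMap D V) ≤ maximalIdeal V → IsReduced (ResidueField V ⊗[D] E))
    (b : E) (hb : IsNilpotent b) (k : ℕ) : b ∈ (valClosure I k).map (algebraMap D E) := by
  have := hart k
  obtain ⟨J', hJ', hmin⟩ := WellFounded.has_min (r := fun a b : Ideal (D ⧸ I ^ k) => a < b)
    wellFounded_lt {J' | b ∈ (J'.comap (Ideal.Quotient.mk (I ^ k))).map (algebraMap D E)}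
    ⟨⊤, by simp [Ideal.comap_top, Ideal.map_top]⟩
  set c := J'.comap (Ideal.Quotient.mk (I ^ k)) with hc
  have hbc : b ∈ c.map (algebraMap D E) := hJ'
  have hcJ : ∀ J : Ideal D, I ^ k ≤ J → b ∈ J.map (algebraMap D E) → c ≤ J := by
    intro J hIJ hbJ
    have h1 : (J.map (Ideal.Quotient.mk (I ^ k))).comap (Ideal.Quotient.mk (I ^ k)) = J := by
      rw [Ideal.comap_map_of_surjective _ Ideal.Quotient.mk_surjective, ← RingHom.ker_eq_comap_bot,
        Ideal.mk_ker]
      exact sup_eq_left.mpr hIJ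
    have h2 := hmin (J' ⊓ J.map (Ideal.Quotient.mk (I ^ k))) (by
      simp only [Set.mem_ofPred_eq, Ideal.comap_inf, h1]
      exact aux_mem_map_inf _ _ _ hbc hbJ)
    have h3 : J' ≤ J.map (Ideal.Quotient.mk (I ^ k)) := by
      by_contra h
      exact h2 (lt_of_le_of_ne inf_le_left (fun h' => h (inf_eq_left.mp h')))
    rw [← h1]
    exact Ideal.comap_mono h3
  suffices hle : c ≤ valClosure I k from Ideal.map_mono hle hbc
  intro x hx V _ _ _ φ hφ
  let _ : Algebra D V := φ.toAlgebra
  have hφa : algebraMap D V = φ := rfl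
  have hredV := hred V hφ
  have hfg : (c.map φ).FG := Ideal.FG.map (IsNoetherian.noetherian c) φ
  obtain ⟨y, hy⟩ := (IsBezout.isPrincipal_of_FG _ hfg).principal
  change c.map φ = Ideal.span {y} at hy
  suffices hyI : y ∈ (I ^ k).map φ by
    have : c.map φ ≤ (I ^ k).map φ := by
      rw [hy, Ideal.span_singleton_le_iff_mem]; exact hyI
    exact this (Ideal.mem_map_of_mem φ hx)
  by_contra hyI
  have hy0 : y ≠ 0 := by rintro rfl; exact hyI (zero_mem _)
  have h1 : (1 : V) ⊗ₜ[D] b ∈ Ideal.span {algebraMap V (V ⊗[D] E) y} := by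
    have h2 : (1 : V) ⊗ₜ[D] b ∈ (c.map (algebraMap D E)).map
        (Algebra.TensorProduct.includeRight : E →ₐ[D] V ⊗[D] E).toRingHom :=
      Ideal.mem_map_of_mem _ hbc
    rw [Ideal.map_map] at h2
    have h3 : (Algebra.TensorProduct.includeRight : E →ₐ[D] V ⊗[D] E).toRingHom.comp
        (algebraMap D E) = (algebraMap V (V ⊗[D] E)).comp φ := by
      ext d
      simp only [RingHom.comp_apply, ← hφa, ← IsScalarTower.algebraMap_apply D V (V ⊗[D] E)]
      exact AlgHom.commutes _ d
    rw [h3, ← Ideal.map_map, hy, Ideal.map_span, Set.image_singleton] at h2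
    exact h2
  obtain ⟨b', hb'⟩ := Ideal.mem_span_singleton'.mp h1
  have hbn : IsNilpotent b' := by
    obtain ⟨n, hn⟩ := hb
    refine ⟨n, ?_⟩
    have h2 : (b' * algebraMap V (V ⊗[D] E) y) ^ n = 0 := by
      rw [hb', Algebra.TensorProduct.tmul_pow, hn, TensorProduct.tmul_zero]
    rw [mul_pow, ← map_pow, mul_comm, ← Algebra.smul_def] at h2
    have htf : Module.IsTorsionFree V (V ⊗[D] E) := inferInstance
    exact (smul_eq_zero.mp h2).resolve_left (pow_ne_zero n hy0)
  have hbm : b' ∈ (maximalIdeal V).map (algebraMap V (V ⊗[D] E)) := by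
    let r : V →ₐ[D] ResidueField V := IsScalarTower.toAlgHom D V (ResidueField V)
    have hr : Function.Surjective r := IsLocalRing.residue_surjective
    have h4 : Algebra.TensorProduct.map r (AlgHom.id D E) b' = 0 :=
      (hbn.map (Algebra.TensorProduct.map r (AlgHom.id D E))).eq_zero
    have h5 := Algebra.TensorProduct.rTensor_ker (R := D) (C := E) r hr
    have h6 : b' ∈ RingHom.ker (Algebra.TensorProduct.map r (AlgHom.id D E)) := h4
    rw [h5] at h6
    have h7 : RingHom.ker r = maximalIdeal V := IsLocalRing.ker_residue
    rw [h7] at h6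
    exact h6
  let Y : Ideal V := Ideal.span {y} * maximalIdeal V
  have hYb : (1 : V) ⊗ₜ[D] b ∈ Y.map (algebraMap V (V ⊗[D] E)) := by
    rw [← hb', mul_comm, Ideal.map_mul]
    exact Ideal.mul_mem_mul (Ideal.mem_map_of_mem _ (Ideal.mem_span_singleton_self y)) hbm
  let q : V →ₐ[D] V ⧸ Y := Ideal.Quotient.mkₐ D Y
  have hbJ : b ∈ Ideal.map (algebraMap D E) (LinearMap.ker (Algebra.linearMap D (V ⧸ Y))) := by
    apply aux_mem_map_ker
    rw [Algebra.linearMap_apply, map_one]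
    have h8 : Y.map (algebraMap V (V ⊗[D] E)) ≤
        RingHom.ker (Algebra.TensorProduct.map q (AlgHom.id D E)) := by
      rw [Ideal.map_le_iff_le_comap]
      intro v hv
      rw [Ideal.mem_comap, RingHom.mem_ker, Algebra.TensorProduct.algebraMap_apply,
        Algebra.TensorProduct.map_tmul]
      have : q v = 0 := Ideal.Quotient.eq_zero_iff_mem.mpr hv
      simp [this]
    have h9 := h8 hYb
    rw [RingHom.mem_ker, Algebra.TensorProduct.map_tmul, map_one] at h9
    exact h9
  have hker : ∀ d : D, d ∈ LinearMap.ker (Algebra.linearMap D (V ⧸ Y)) ↔ φ d ∈ Y := fun d => by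
    rw [LinearMap.mem_ker, Algebra.linearMap_apply]
    exact Ideal.Quotient.eq_zero_iff_mem
  have hcY : c ≤ LinearMap.ker (Algebra.linearMap D (V ⧸ Y)) := by
    refine hcJ _ (fun d hd => ?_) hbJ
    rw [hker]
    have hd' : φ d ∈ (I ^ k).map φ := Ideal.mem_map_of_mem φ hd
    rcases ValuationRing.dvd_total (φ d) y with ⟨t, ht⟩ | ⟨t, ht⟩
    · exact absurd (ht ▸ Ideal.mul_mem_right _ _ hd') hyI
    · rw [ht]
      refine Ideal.mul_mem_mul (Ideal.mem_span_singleton_self y) ?_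
      rw [mem_maximalIdeal, mem_nonunits_iff]
      rintro ⟨u, rfl⟩
      apply hyI
      have : y = φ d * ↑u⁻¹ := by rw [ht, mul_assoc, Units.mul_inv, mul_one]
      rw [this]; exact Ideal.mul_mem_right _ _ hd'
  have hyY : y ∈ Y := by
    have h10 : c.map φ ≤ Y := Ideal.map_le_iff_le_comap.mpr fun d hd => (hker d).mp (hcY hd)
    exact h10 (hy ▸ Ideal.mem_span_singleton_self y)
  obtain ⟨z, hz, hyz⟩ := Ideal.mem_span_singleton_mul.mp hyY
  have : z = 1 := by
    apply mul_left_cancel₀ hy0; rw [hyz, mul_one]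
  rw [this] at hz
  exact (Ideal.ne_top_iff_one _).mp (maximalIdeal.isMaximal V).ne_top hz


theorem aux_fg_tensor {k R D : Type*} [Field k] [IsAlgClosed k] [CommRing R] [Algebra k R]
    [IsReduced R] [CommRing D] [IsReduced D] [Algebra k D] [Algebra.FiniteType k D] :
    IsReduced (D ⊗[k] R) := by
  refine ⟨fun x hx => ?_⟩
  let e := Module.Basis.ofVectorSpace k R
  have hJ : IsJacobsonRing D := isJacobsonRing_of_finiteType (A := k)
  have key : ∀ (ε : D →ₐ[k] k) i, ε ((Algebra.TensorProduct.basis D e).repr x i) = 0 := by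
    intro ε i
    have h1 : (Algebra.TensorProduct.lid k R)
        (Algebra.TensorProduct.map ε (AlgHom.id k R) x) = 0 := by
      apply IsNilpotent.eq_zero
      exact (hx.map (Algebra.TensorProduct.map ε (AlgHom.id k R))).map
        (Algebra.TensorProduct.lid k R)
    have h2 : ∀ z : D ⊗[k] R, e.repr ((Algebra.TensorProduct.lid k R)
        (Algebra.TensorProduct.map ε (AlgHom.id k R) z)) i =
          ε ((Algebra.TensorProduct.basis D e).repr z i) := by
      intro z
      induction z with
      | zero => simp
      | add a b ha hb => simp only [map_add, Finsupp.add_apply, ha, hb]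
      | tmul a b => simp
    rw [← h2, h1]; simp
  have : (Algebra.TensorProduct.basis D e).repr x = 0 := by
    ext i
    have hmem : (Algebra.TensorProduct.basis D e).repr x i ∈ (⊥ : Ideal D).jacobson := by
      rw [Ideal.jacobson, Ideal.mem_sInf]
      rintro M ⟨-, hM⟩
      let := Ideal.Quotient.field M
      have hfin : Module.Finite k (D ⧸ M) := finite_of_finite_type_of_isJacobsonRing k (D ⧸ M)
      have hb : Function.Bijective (algebraMap k (D ⧸ M)) :=
        IsAlgClosed.algebraMap_bijective_of_isIntegral
      let f : (D ⧸ M) ≃ₐ[k] k := (AlgEquiv.ofBijective (Algebra.ofId k (D ⧸ M)) hb).symm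
      have := key (f.toAlgHom.comp (Ideal.Quotient.mkₐ k M)) i
      rw [← Ideal.Quotient.eq_zero_iff_mem]
      exact f.injective (by simpa using this)
    rw [IsJacobsonRing.out hJ (Ideal.isRadical_bot_iff.mpr inferInstance)] at hmem
    simpa using hmem
  simpa using this

theorem aux_algClosed_tensor {k R K : Type*} [Field k] [IsAlgClosed k] [CommRing R] [Algebra k R]
    [IsReduced R] [CommRing K] [IsReduced K] [Algebra k K] :
    IsReduced (R ⊗[k] K) := by
  apply IsReduced.tensorProduct_of_flat_of_forall_fg
  intro D hD
  have : Algebra.FiniteType k D := D.fg_iff_finiteType.mp hD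
  have : IsReduced D := isReduced_of_injective D.val Subtype.val_injective
  have := aux_fg_tensor (k := k) (R := R) (D := D)
  exact isReduced_of_injective (Algebra.TensorProduct.comm k R D)
    (Algebra.TensorProduct.comm k R D).injective

theorem GeometricallyReduced.isReduced_tensor {F : Type u} {R : Type v} [Field F] [CommRing R]
    [Algebra F R] (h : GeometricallyReduced F R) (K : Type u) [Field K] [Algebra F K] :
    IsReduced (K ⊗[F] R) := by
  have h1 : IsReduced (R ⊗[F] AlgebraicClosure F) := by
    apply IsReduced.tensorProduct_of_flat_of_forall_fg
    intro D hD
    have hInt : Algebra.IsIntegral F D :=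
      Algebra.IsIntegral.of_injective D.val Subtype.val_injective
    have : Algebra.FiniteType F D := D.fg_iff_finiteType.mp hD
    have : Module.Finite F D := Algebra.IsIntegral.finite
    let : Field D := (Algebra.IsIntegral.isField_iff_isField
      (algebraMap F D).injective).mp (Field.toIsField F) |>.toField
    have := h D
    exact isReduced_of_injective (Algebra.TensorProduct.comm F R D)
      (Algebra.TensorProduct.comm F R D).injective
  have h1' : IsReduced (AlgebraicClosure F ⊗[F] R) :=
    isReduced_of_injective (Algebra.TensorProduct.comm F _ _)
      (Algebra.TensorProduct.comm F (AlgebraicClosure F) R).injective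
  let g : AlgebraicClosure F →ₐ[F] AlgebraicClosure K := IsAlgClosed.lift
  let : Algebra (AlgebraicClosure F) (AlgebraicClosure K) := g.toRingHom.toAlgebra
  have : IsScalarTower F (AlgebraicClosure F) (AlgebraicClosure K) :=
    IsScalarTower.of_algebraMap_eq fun x => (g.commutes x).symm
  have h2 : IsReduced ((AlgebraicClosure F ⊗[F] R) ⊗[AlgebraicClosure F] AlgebraicClosure K) :=
    aux_algClosed_tensor
  let e1 := Algebra.TensorProduct.comm (AlgebraicClosure F) (AlgebraicClosure K)
    (AlgebraicClosure F ⊗[F] R)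
  let e2 := Algebra.TensorProduct.cancelBaseChange F (AlgebraicClosure F) (AlgebraicClosure F)
    (AlgebraicClosure K) R
  have h3 : IsReduced (AlgebraicClosure K ⊗[F] R) :=
    isReduced_of_injective (e2.symm.trans e1) (e2.symm.trans e1).injective
  refine isReduced_of_injective (Algebra.TensorProduct.map
    (IsScalarTower.toAlgHom F K (AlgebraicClosure K)) (AlgHom.id F R)) ?_
  exact Module.Flat.rTensor_preserves_injective_linearMap (M := R)
    (IsScalarTower.toAlgHom F K (AlgebraicClosure K)).toLinearMap (RingHom.injective _)


theorem isPrecomplete_of_finite {R M : Type*} [CommRing R] [AddCommGroup M] [Module R M]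
    (I : Ideal R) [IsPrecomplete I R] [Module.Finite R M] : IsPrecomplete I M := by
  obtain ⟨r, s, hs⟩ := Module.Finite.exists_fin (R := R) (M := M)
  refine ⟨fun f hf => ?_⟩
  have h1 : ∀ j, ∃ c : Fin r → R, (∀ i, c i ∈ I ^ j) ∧ f (j + 1) - f j = ∑ i, c i • s i := by
    intro j
    have h2 : f (j + 1) - f j ∈ I ^ j • (⊤ : Submodule R M) :=
      SModEq.sub_mem.mp (hf (Nat.le_succ j)).symm
    rw [← hs, Submodule.mem_ideal_smul_span_iff_exists_sum] at h2
    obtain ⟨a, ha, ha'⟩ := h2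
    refine ⟨a, ha, ?_⟩
    rw [← ha', Finsupp.sum_fintype _ _ (by simp)]
  choose c hc hc' using h1
  have h3 : ∀ i, ∃ L : R, ∀ n, (∑ j ∈ Finset.range n, c j i) - L ∈ I ^ n := by
    intro i
    obtain ⟨L, hL⟩ := IsPrecomplete.prec (I := I) (M := R) inferInstance
      (f := fun n => ∑ j ∈ Finset.range n, c j i) (by
        intro m n hmn
        rw [SModEq.comm, SModEq.sub_mem, Finset.sum_range_sub_sum_range hmn]
        simp only [smul_eq_mul, Ideal.mul_top]
        refine Ideal.sum_mem _ fun j hj => ?_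
        simp only [Finset.mem_filter] at hj
        exact Ideal.pow_le_pow_right hj.2 (hc j i))
    refine ⟨L, fun n => ?_⟩
    have := SModEq.sub_mem.mp (hL n)
    simpa using this
  choose L hL using h3
  refine ⟨f 0 + ∑ i, L i • s i, fun n => ?_⟩
  have h4 : f n = f 0 + ∑ i, (∑ j ∈ Finset.range n, c j i) • s i := by
    have : f n - f 0 = ∑ j ∈ Finset.range n, (f (j + 1) - f j) := (Finset.sum_range_sub f n).symm
    rw [← sub_eq_iff_eq_add', this]
    simp_rw [hc', Finset.sum_smul]
    rw [Finset.sum_comm]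
  rw [SModEq.sub_mem, h4, add_sub_add_left_eq_sub, ← Finset.sum_sub_distrib]
  refine Submodule.sum_mem _ fun i _ => ?_
  rw [← sub_smul]
  exact Submodule.smul_mem_smul (hL i n) trivial

theorem isArtinianRing_quot_pow {R S : Type*} [CommRing R] [IsLocalRing R] [CommRing S]
    [Algebra R S] [Algebra.IsIntegral R S] [IsNoetherianRing S] (n : ℕ) :
    IsArtinianRing (S ⧸ ((maximalIdeal R).map (algebraMap R S)) ^ n) := by
  set I := (maximalIdeal R).map (algebraMap R S)
  rw [isArtinianRing_iff_isNoetherianRing_krullDimLE_zero]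
  refine ⟨inferInstance, Ring.KrullDimLE.mk₀ fun p hp => ?_⟩
  let q := p.comap (Ideal.Quotient.mk (I ^ n))
  have hq : q.IsPrime := hp.comap _
  have hIq : I ≤ q := by
    refine Ideal.IsPrime.le_of_pow_le (n := n) fun a ha => ?_
    change Ideal.Quotient.mk _ a ∈ p
    rw [Ideal.Quotient.eq_zero_iff_mem.mpr ha]; exact p.zero_mem
  have h1 : q.comap (algebraMap R S) = maximalIdeal R :=
    (IsLocalRing.maximalIdeal.isMaximal R).eq_of_le (hq.comap _).ne_top
      (Ideal.map_le_iff_le_comap.mp hIq) |>.symm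
  have h2 : q.IsMaximal := Ideal.isMaximal_of_isIntegral_of_isMaximal_comap q
    (h1 ▸ IsLocalRing.maximalIdeal.isMaximal R)
  have h3 : p = q.map (Ideal.Quotient.mk (I ^ n)) :=
    (Ideal.map_comap_of_surjective _ Ideal.Quotient.mk_surjective p).symm
  rw [h3]
  refine (Ideal.map_eq_top_or_isMaximal_of_surjective _ Ideal.Quotient.mk_surjective h2).resolve_left
    (h3 ▸ hp.ne_top)

theorem map_maximalIdeal_le {R S : Type*} [CommRing R] [IsLocalRing R] [CommRing S]
    [Algebra R S] [Algebra.IsIntegral R S] (M : Ideal S) (hM : M.IsMaximal) :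
    (maximalIdeal R).map (algebraMap R S) ≤ M := by
  rw [Ideal.map_le_iff_le_comap]
  have := Ideal.isMaximal_comap_of_isIntegral_of_isMaximal (R := R) M
  exact (IsLocalRing.eq_maximalIdeal this).ge

theorem chevalley {S : Type*} [CommRing S] (I : Ideal S) (Q : ℕ → Ideal S) (hQ : Antitone Q)
    (hIQ : ∀ k, I ^ k ≤ Q k) (h0 : ∀ x, (∀ k, x ∈ Q k) → x = 0) [IsPrecomplete I S]
    (hart : ∀ n, IsArtinianRing (S ⧸ I ^ n)) (n : ℕ) : ∃ k, Q k ≤ I ^ n := by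
  have h1 : ∀ n, ∃ N, ∀ k, N ≤ k → Q N ≤ Q k ⊔ I ^ n := by
    intro n
    have := hart n
    obtain ⟨N, hN⟩ := IsArtinian.monotone_stabilizes (R := S ⧸ I ^ n) (M := S ⧸ I ^ n)
      ⟨fun k => OrderDual.toDual ((Q k).map (Ideal.Quotient.mk (I ^ n))),
        fun a b hab => Ideal.map_mono (hQ hab)⟩
    refine ⟨N, fun k hk => ?_⟩
    have h2 : (Q N).map (Ideal.Quotient.mk (I ^ n)) = (Q k).map (Ideal.Quotient.mk (I ^ n)) :=
      hN k hk
    have h3 := Ideal.le_comap_map (f := Ideal.Quotient.mk (I ^ n)) (I := Q N)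
    rw [h2, Ideal.comap_map_of_surjective _ Ideal.Quotient.mk_surjective] at h3
    rwa [← RingHom.ker_eq_comap_bot, Ideal.mk_ker] at h3
  choose N hN using h1
  let N' : ℕ → ℕ := fun n => ∑ i ∈ Finset.range (n + 1), N i + n
  have hNN' : ∀ n, N n ≤ N' n := fun n => by
    have : N n ≤ ∑ i ∈ Finset.range (n + 1), N i :=
      Finset.single_le_sum (f := N) (fun _ _ => Nat.zero_le _) (Finset.self_mem_range_succ n)
    exact this.trans (Nat.le_add_right _ _)
  have hN's : ∀ n, N' n ≤ N' (n + 1) := fun n => by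
    simp only [N']; rw [Finset.sum_range_succ N (n + 1)]; omega
  have hstep : ∀ j x, x ∈ Q (N' j) → ∃ x', x' ∈ Q (N' (j + 1)) ∧ x' - x ∈ I ^ j := by
    intro j x hx
    have := hN j (N' (j + 1)) ((hNN' j).trans (hN's j)) (hQ (hNN' j) hx)
    obtain ⟨a, ha, b, hb, hab⟩ := Submodule.mem_sup.mp this
    refine ⟨a, ha, ?_⟩
    rw [← hab, sub_add_cancel_left]
    exact neg_mem hb
  choose! g hg hg' using hstep
  refine ⟨N' n, fun x hx => ?_⟩
  let f : ℕ → S := fun i => Nat.rec x (fun i y => g (n + i) y) i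
  have hfs : ∀ i, f (i + 1) = g (n + i) (f i) := fun i => rfl
  have hf : ∀ i, f i ∈ Q (N' (n + i)) := by
    intro i
    induction i with
    | zero => exact hx
    | succ i ih => rw [hfs]; exact hg _ _ ih
  have hd : ∀ i, f (i + 1) - f i ∈ I ^ (n + i) := fun i => hg' _ _ (hf i)
  have hdd : ∀ a b, a ≤ b → f b - f a ∈ I ^ (n + a) := by
    intro a b hab
    induction b, hab using Nat.le_induction with
    | base => simp
    | succ b hab ih =>
      have := Ideal.add_mem _ (Ideal.pow_le_pow_right (by omega) (hd b)) ih
      simpa using this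
  obtain ⟨L, hL⟩ := IsPrecomplete.prec (I := I) (M := S) inferInstance (f := f) (by
    intro a b hab
    rw [SModEq.comm, SModEq.sub_mem]
    simpa using Ideal.pow_le_pow_right (Nat.le_add_left a n) (hdd a b hab))
  have hL' : ∀ i, f i - L ∈ I ^ i := fun i => by
    simpa using SModEq.sub_mem.mp (hL i)
  have hL0 : L = 0 := by
    apply h0
    intro k
    have h5 : f k ∈ Q k := hQ (by simp only [N']; omega) (hf k)
    have := Ideal.sub_mem _ h5 (hIQ k (hL' k))
    simpa using this
  subst hL0
  have h6 := hdd 0 n (Nat.zero_le n)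
  have h7 := hL' n
  have := Ideal.sub_mem _ h7 h6
  simpa [f] using this


/-- initial forms -/
def initialIdeal {A R : Type*} [CommRing A] [CommRing R] [Algebra A R] (m : Ideal A)
    (I : Ideal R) : Ideal (reesAlgebra m) where
  carrier := {f | ∀ i, algebraMap A R ((f : Polynomial A).coeff i) ∈
    (I ⊓ (m.map (algebraMap A R)) ^ i) ⊔ (m.map (algebraMap A R)) ^ (i + 1)}
  add_mem' := fun ha hb i => by
    simp only [Subalgebra.coe_add, Polynomial.coeff_add, map_add]
    exact Ideal.add_mem _ (ha i) (hb i)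
  zero_mem' := fun i => by simp
  smul_mem' := fun c x hx i => by
    simp only [smul_eq_mul, Subalgebra.coe_mul, Polynomial.coeff_mul, map_sum, map_mul]
    refine Ideal.sum_mem _ fun ⟨a, b⟩ hab => ?_
    simp only [Finset.HasAntidiagonal.mem_antidiagonal] at hab
    have hc : algebraMap A R ((c : Polynomial A).coeff a) ∈ (m.map (algebraMap A R)) ^ a := by
      rw [← Ideal.map_pow]; exact Ideal.mem_map_of_mem _ (c.2 a)
    obtain ⟨y, ⟨hy1, hy2⟩, z, hz, hyz⟩ := Submodule.mem_sup.mp (hx b)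
    simp only
    rw [← hyz, mul_add]
    refine Submodule.add_mem_sup ⟨Ideal.mul_mem_left _ _ hy1, ?_⟩ ?_
    · rw [← hab, pow_add]; exact Ideal.mul_mem_mul hc hy2
    · rw [← hab, add_assoc, pow_add]; exact Ideal.mul_mem_mul hc hz

theorem noetherian_of_complete {A R : Type*} [CommRing A] [CommRing R] [Algebra A R]
    [IsNoetherianRing A] (m : Ideal A) [IsAdicComplete (m.map (algebraMap A R)) R]
    (hsurj : ∀ x : R, ∃ a : A, x - algebraMap A R a ∈ m.map (algebraMap A R)) :
    IsNoetherianRing R := by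
  set mR := m.map (algebraMap A R) with hmR
  have hsurj' : ∀ n, ∀ x ∈ mR ^ n, ∃ a ∈ m ^ n, x - algebraMap A R a ∈ mR ^ (n + 1) := by
    intro n x hx
    rw [hmR, ← Ideal.map_pow] at hx
    induction hx using Submodule.span_induction with
    | mem x hx =>
      obtain ⟨a, ha, rfl⟩ := hx
      exact ⟨a, ha, by simp⟩
    | zero => exact ⟨0, zero_mem _, by simp⟩
    | add x y _ _ hx hy =>
      obtain ⟨a, ha, ha'⟩ := hx
      obtain ⟨b, hb, hb'⟩ := hy
      refine ⟨a + b, add_mem ha hb, ?_⟩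
      rw [map_add, add_sub_add_comm]
      exact add_mem ha' hb'
    | smul r x hx' hx =>
      obtain ⟨a, ha, ha'⟩ := hx
      obtain ⟨b, hb⟩ := hsurj r
      refine ⟨b * a, Ideal.mul_mem_left _ _ ha, ?_⟩
      have h1 : r • x - algebraMap A R (b * a) =
        r * (x - algebraMap A R a) + (r - algebraMap A R b) * algebraMap A R a := by
        rw [map_mul, smul_eq_mul]; ring
      rw [h1]
      refine add_mem (Ideal.mul_mem_left _ _ ha') ?_
      rw [pow_succ']
      refine Ideal.mul_mem_mul hb ?_
      rw [hmR, ← Ideal.map_pow]; exact Ideal.mem_map_of_mem _ ha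
  refine (isNoetherianRing_iff_ideal_fg R).mpr fun I => ?_
  obtain ⟨r, F, hF⟩ := Submodule.fg_iff_exists_fin_generating_family.mp
    (IsNoetherian.noetherian (initialIdeal (R := R) m I))
  have hF' : ∀ s, F s ∈ initialIdeal (R := R) m I := fun s => hF ▸ Submodule.subset_span ⟨s, rfl⟩
  have hlift : ∀ s i, ∃ w, w ∈ I ∧ w ∈ mR ^ i ∧
      algebraMap A R ((F s : Polynomial A).coeff i) - w ∈ mR ^ (i + 1) := by
    intro s i
    obtain ⟨y, ⟨hy1, hy2⟩, z, hz, hyz⟩ := Submodule.mem_sup.mp (hF' s i)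
    exact ⟨y, hy1, hy2, by rw [← hyz]; simpa using hz⟩
  choose w hwI hwm hw using hlift
  let N := Finset.univ.sup (fun s => (F s : Polynomial A).natDegree) + 1
  have hN : ∀ s i, N ≤ i → (F s : Polynomial A).coeff i = 0 := fun s i hi => by
    apply Polynomial.coeff_eq_zero_of_natDegree_lt
    have : (F s : Polynomial A).natDegree ≤ Finset.univ.sup (fun s => (F s : Polynomial A).natDegree) :=
      Finset.le_sup (f := fun s => (F s : Polynomial A).natDegree) (Finset.mem_univ s)
    omega
  -- one step of approximation
  have hstep : ∀ n x, x ∈ I ⊓ mR ^ n → ∃ c : Fin r → Fin N → R,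
      (∀ s i, c s i ∈ mR ^ (n - N)) ∧
      x - ∑ s, ∑ i, c s i * w s i ∈ I ⊓ mR ^ (n + 1) := by
    rintro n x ⟨hxI, hxm⟩
    obtain ⟨a, ha, hxa⟩ := hsurj' n x hxm
    have hmono : (⟨Polynomial.monomial n a, reesAlgebra.monomial_mem.mpr ha⟩ : reesAlgebra m) ∈
        initialIdeal (R := R) m I := by
      intro i
      simp only [Polynomial.coeff_monomial]
      split_ifs with h
      · subst h
        have : algebraMap A R a = x + -(x - algebraMap A R a) := by ring
        rw [this]
        exact Submodule.add_mem_sup ⟨hxI, hxm⟩ (neg_mem hxa)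
      · simp
    rw [← hF, Submodule.mem_span_range_iff_exists_fun] at hmono
    obtain ⟨g, hg⟩ := hmono
    have hg1 : a = ∑ s, ∑ p ∈ Finset.HasAntidiagonal.antidiagonal n,
        (g s : Polynomial A).coeff p.1 * (F s : Polynomial A).coeff p.2 := by
      have := congrArg (fun f : reesAlgebra m => (f : Polynomial A).coeff n) hg
      simp only [smul_eq_mul, AddSubmonoidClass.coe_finsetSum, Subalgebra.coe_mul,
        Polynomial.finsetSum_coeff, Polynomial.coeff_mul, Polynomial.coeff_monomial,
        if_true] at this
      exact this.symm
    let c : Fin r → Fin N → R := fun s i =>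
      if (i : ℕ) ≤ n then algebraMap A R ((g s : Polynomial A).coeff (n - i)) else 0
    have hgm : ∀ s i, algebraMap A R ((g s : Polynomial A).coeff i) ∈ mR ^ i := fun s i => by
      rw [hmR, ← Ideal.map_pow]; exact Ideal.mem_map_of_mem _ ((g s).2 i)
    have hg2 : ∀ s, ∑ p ∈ Finset.HasAntidiagonal.antidiagonal n,
        (g s : Polynomial A).coeff p.1 * (F s : Polynomial A).coeff p.2 =
        ∑ i : Fin N, if (i : ℕ) ≤ n then
          (g s : Polynomial A).coeff (n - i) * (F s : Polynomial A).coeff i else 0 := by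
      intro s
      rw [Finset.sum_fin_eq_sum_range]
      rw [← Finset.Nat.sum_antidiagonal_swap, Finset.Nat.sum_antidiagonal_eq_sum_range_succ_mk]
      simp only [Prod.swap]
      let h : ℕ → A := fun i => if i ≤ n then
        (g s : Polynomial A).coeff (n - i) * (F s : Polynomial A).coeff i else 0
      have e1 : ∑ i ∈ Finset.range n.succ,
          (g s : Polynomial A).coeff (n - i) * (F s : Polynomial A).coeff i =
          ∑ i ∈ Finset.range (max n.succ N), h i := by
        rw [← Finset.sum_subset (s₁ := Finset.range n.succ) (Finset.range_mono (le_max_left _ _))]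
        · refine Finset.sum_congr rfl fun i hi => ?_
          simp only [Finset.mem_range] at hi
          simp only [h, if_pos (Nat.lt_succ_iff.mp hi)]
        · intro i _ hi
          simp only [Finset.mem_range] at hi
          simp only [h, if_neg (fun h' : i ≤ n => hi (Nat.lt_succ_of_le h'))]
      have e2 : ∑ i ∈ Finset.range N, (if _ : i < N then h i else 0) =
          ∑ i ∈ Finset.range (max n.succ N), h i := by
        rw [← Finset.sum_subset (s₁ := Finset.range N) (Finset.range_mono (le_max_right _ _))]
        · refine Finset.sum_congr rfl fun i hi => ?_
          simp only [Finset.mem_range] at hi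
          simp only [dif_pos hi]
        · intro i _ hi
          simp only [Finset.mem_range, not_lt] at hi
          simp only [h, hN s i hi, mul_zero, ite_self]
      rw [e1, ← e2]
    refine ⟨c, fun s i => ?_, ?_, ?_⟩
    · simp only [c]
      split_ifs
      · exact Ideal.pow_le_pow_right (by omega) (hgm s (n - i))
      · exact zero_mem _
    · exact sub_mem hxI (Ideal.sum_mem _ fun s _ => Ideal.sum_mem _ fun i _ =>
        Ideal.mul_mem_left _ _ (hwI s i))
    · have h1 : x - ∑ s, ∑ i, c s i * w s i = (x - algebraMap A R a) +
          (algebraMap A R a - ∑ s, ∑ i, c s i * w s i) := by ring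
      rw [h1]
      refine add_mem hxa ?_
      rw [hg1]
      simp_rw [hg2]
      rw [map_sum, ← Finset.sum_sub_distrib]
      refine Ideal.sum_mem _ fun s _ => ?_
      rw [map_sum, ← Finset.sum_sub_distrib]
      refine Ideal.sum_mem _ fun i _ => ?_
      simp only [c]
      split_ifs with hi
      · rw [map_mul, ← mul_sub]
        have : n + 1 = (n - i) + (i + 1) := by omega
        rw [this, pow_add]
        exact Ideal.mul_mem_mul (hgm s _) (hw s i)
      · simp
  choose! c hc hc' using hstep
  classical
  refine ⟨Finset.univ.image (fun p : Fin r × Fin N => w p.1 p.2), le_antisymm ?_ ?_⟩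
  · rw [Submodule.span_le]
    intro z hz
    simp only [Finset.coe_image, Set.mem_image] at hz
    obtain ⟨p, -, rfl⟩ := hz
    exact hwI _ _
  intro x hx
  let X : ℕ → R := fun n => Nat.rec x (fun n y => y - ∑ s, ∑ i, c n y s i * w s i) n
  have hXs : ∀ n, X (n + 1) = X n - ∑ s, ∑ i, c n (X n) s i * w s i := fun n => rfl
  have hX : ∀ n, X n ∈ I ⊓ mR ^ n := by
    intro n
    induction n with
    | zero => exact ⟨hx, by simp⟩
    | succ n ih => rw [hXs]; exact hc' n _ ih
  have hsum : ∀ n, x - X n = ∑ s, ∑ i, (∑ j ∈ Finset.range n, c j (X j) s i) * w s i := by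
    intro n
    induction n with
    | zero => simp [X]
    | succ n ih =>
      rw [hXs, ← sub_add, ih]
      simp_rw [Finset.sum_range_succ, add_mul, Finset.sum_add_distrib]
  have hlim : ∀ s i, ∃ L : R, ∀ n, (∑ j ∈ Finset.range (n + N), c j (X j) s i) - L ∈ mR ^ n := by
    intro s i
    obtain ⟨L, hL⟩ := IsPrecomplete.prec (I := mR) (M := R) inferInstance
      (f := fun n => ∑ j ∈ Finset.range (n + N), c j (X j) s i) (by
        intro a b hab
        rw [SModEq.comm, SModEq.sub_mem, Finset.sum_range_sub_sum_range (by omega)]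
        simp only [smul_eq_mul, Ideal.mul_top]
        refine Ideal.sum_mem _ fun j hj => ?_
        simp only [Finset.mem_filter] at hj
        exact Ideal.pow_le_pow_right (by omega) (hc j _ (hX j) s i))
    refine ⟨L, fun n => ?_⟩
    simpa using SModEq.sub_mem.mp (hL n)
  choose L hL using hlim
  have hfin : x = ∑ s, ∑ i, L s i * w s i := by
    rw [← sub_eq_zero]
    apply IsHausdorff.haus (I := mR) (M := R) inferInstance
    intro n
    rw [SModEq.zero]
    simp only [smul_eq_mul, Ideal.mul_top]
    have h1 : x - ∑ s, ∑ i, L s i * w s i = X (n + N) +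
        ∑ s, ∑ i, ((∑ j ∈ Finset.range (n + N), c j (X j) s i) - L s i) * w s i := by
      simp_rw [sub_mul, Finset.sum_sub_distrib]
      rw [← hsum]; ring
    rw [h1]
    refine add_mem (Ideal.pow_le_pow_right (by omega) (hX (n + N)).2) ?_
    exact Ideal.sum_mem _ fun s _ => Ideal.sum_mem _ fun i _ => Ideal.mul_mem_right _ _ (hL s i n)
  rw [hfin]
  refine Ideal.sum_mem _ fun s _ => Ideal.sum_mem _ fun i _ => Ideal.mul_mem_left _ _ ?_
  apply Submodule.subset_span
  simp only [Finset.coe_image, Set.mem_image]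
  exact ⟨(s, i), by simp, rfl⟩

theorem noetherian_adicCompletion (A : Type*) [CommRing A] [IsNoetherianRing A] [IsLocalRing A] :
    IsNoetherianRing (AdicCompletion (maximalIdeal A) A) := by
  have hfg := (maximalIdeal A).fg_of_isNoetherianRing
  have := AdicCompletion.isAdicComplete_self (maximalIdeal A) hfg
  refine noetherian_of_complete (maximalIdeal A) fun x => ?_
  obtain ⟨a, ha⟩ := Ideal.Quotient.mk_surjective
    (AdicCompletion.evalOneₐ (maximalIdeal A) x)
  refine ⟨a, ?_⟩
  rw [← AdicCompletion.ker_evalOneₐ_eq_map _ hfg, RingHom.mem_ker]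
  change AdicCompletion.evalOneₐ (maximalIdeal A) (x - algebraMap A _ a) = 0
  rw [map_sub, AlgHom.commutes, ← ha]
  exact sub_self _

theorem rees_valClosure {R S : Type u} [CommRing R] [IsLocalRing R] [IsNoetherianRing R]
    [IsPrecomplete (maximalIdeal R) R] [CommRing S] [IsReduced S] [Algebra R S] [Module.Finite R S]
    (n : ℕ) : ∃ k, valClosure ((maximalIdeal R).map (algebraMap R S)) k ≤
      ((maximalIdeal R).map (algebraMap R S)) ^ n := by
  have : IsNoetherianRing S := IsNoetherianRing.of_finite R S
  have : IsPrecomplete ((maximalIdeal R).map (algebraMap R S)) S :=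
    IsPrecomplete.map_algebraMap_iff.mpr (isPrecomplete_of_finite _)
  refine chevalley _ _ (valClosure_antitone _) (pow_le_valClosure _) (fun x hx => ?_)
    (fun n => isArtinianRing_quot_pow n) n
  by_contra hx0
  obtain ⟨k, hk⟩ := exists_notMem_valClosure ((maximalIdeal R).map (algebraMap R S))
    (fun M hM => map_maximalIdeal_le M hM) x hx0
  exact hk (hx k)

theorem mem_pow_of_completion {A D : Type*} [CommRing A] [CommRing D] [Algebra A D] (m : Ideal A)
    (n : ℕ) (x : D)
    (hx : (1 : AdicCompletion m A) ⊗ₜ[A] x ∈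
      (m ^ n).map (algebraMap A (AdicCompletion m A ⊗[A] D))) :
    x ∈ (m ^ n).map (algebraMap A D) := by
  let J := (m ^ n).map (algebraMap A D)
  let g : (A ⧸ m ^ n) →ₐ[A] D ⧸ J := Ideal.Quotient.liftₐ (m ^ n)
    (Algebra.ofId A (D ⧸ J)) (fun a ha => by
      change Ideal.Quotient.mk J (algebraMap A D a) = 0
      exact Ideal.Quotient.eq_zero_iff_mem.mpr (Ideal.mem_map_of_mem _ ha))
  let h : AdicCompletion m A ⊗[A] D →ₐ[A] D ⧸ J :=
    Algebra.TensorProduct.productMap (g.comp (AdicCompletion.evalₐ m n)) (Ideal.Quotient.mkₐ A J)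
  have h1 : (m ^ n).map (algebraMap A (AdicCompletion m A ⊗[A] D)) ≤ RingHom.ker h := by
    rw [Ideal.map_le_iff_le_comap]
    intro a ha
    rw [Ideal.mem_comap, RingHom.mem_ker, AlgHom.commutes]
    change Ideal.Quotient.mk J (algebraMap A D a) = 0
    exact Ideal.Quotient.eq_zero_iff_mem.mpr (Ideal.mem_map_of_mem _ ha)
  have h2 := h1 hx
  rw [RingHom.mem_ker, Algebra.TensorProduct.productMap_apply_tmul, map_one, one_mul] at h2
  exact Ideal.Quotient.eq_zero_iff_mem.mp h2

theorem reduced_closed_fiber {A : Type u} {B : Type v} [CommRing A] [CommRing B]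
    [IsLocalRing A] [Algebra A B] (hfib : GeometricallyReduced (ResidueField A) (ResidueField A ⊗[A] B))
    (D : Type u) [CommRing D] [Algebra A D]
    (V : Type u) [CommRing V] [IsDomain V] [ValuationRing V] [Algebra D V]
    (hV : ((maximalIdeal A).map (algebraMap A D)).map (algebraMap D V) ≤ maximalIdeal V) :
    IsReduced (ResidueField V ⊗[D] (D ⊗[A] B)) := by
  let _ : Algebra A V := ((algebraMap D V).comp (algebraMap A D)).toAlgebra
  have : IsScalarTower A D V := IsScalarTower.of_algebraMap_eq fun _ => rfl
  have : IsLocalHom (algebraMap A V) := by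
    apply ((IsLocalRing.local_hom_TFAE _).out 0 2).mpr
    rw [Ideal.map_map] at hV
    exact hV
  have h1 := hfib.isReduced_tensor (ResidueField V)
  have : IsScalarTower A D (ResidueField V) := IsScalarTower.of_algebraMap_eq fun _ => rfl
  let e1 := Algebra.TensorProduct.cancelBaseChange A D D (ResidueField V) B
  let e2 := Algebra.TensorProduct.cancelBaseChange A (ResidueField A) (ResidueField A)
    (ResidueField V) B
  have h2 : IsReduced (ResidueField V ⊗[A] B) := isReduced_of_injective e2.symm e2.symm.injective
  exact isReduced_of_injective e1 e1.injective

theorem reduced_of_finite {A : Type u} {B : Type v} [CommRing A] [CommRing B] [IsNoetherianRing A]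
    [IsNoetherianRing B] [IsLocalRing A] [IsLocalRing B]
    [Algebra A B] [IsLocalHom (algebraMap A B)] [Module.Flat A B]
    (hfib : GeometricallyReduced (ResidueField A) (ResidueField A ⊗[A] B))
    (D : Type u) [CommRing D] [Algebra A D] [Module.Finite A D]
    [IsReduced (AdicCompletion (maximalIdeal A) A ⊗[A] D)] : IsReduced (B ⊗[A] D) := by
  have := noetherian_adicCompletion A
  have : IsNoetherianRing D := IsNoetherianRing.of_finite A D
  let R := AdicCompletion (maximalIdeal A) A
  set I := (maximalIdeal A).map (algebraMap A D) with hI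
  suffices hE : IsReduced (D ⊗[A] B) from
    isReduced_of_injective (Algebra.TensorProduct.comm A B D)
      (Algebra.TensorProduct.comm A B D).injective
  refine ⟨fun b hb => ?_⟩
  have h1 : ∀ k, b ∈ (valClosure I k).map (algebraMap D (D ⊗[A] B)) :=
    nilpotent_mem_valClosure I (fun k => isArtinianRing_quot_pow k)
      (fun V _ _ _ _ hV => reduced_closed_fiber hfib D V hV) b hb
  have h2 : ∀ n, ∃ k, valClosure I k ≤ I ^ n := by
    intro n
    obtain ⟨k, hk⟩ := rees_valClosure (R := R) (S := R ⊗[A] D) n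
    refine ⟨k, fun x hx => ?_⟩
    have hmap : I.map (Algebra.TensorProduct.includeRight : D →ₐ[A] R ⊗[A] D).toRingHom =
        (maximalIdeal A).map (algebraMap A (R ⊗[A] D)) := by
      rw [hI, Ideal.map_map]
      congr 1
      ext a
      exact AlgHom.commutes (Algebra.TensorProduct.includeRight : D →ₐ[A] R ⊗[A] D) a
    have hmap' : (maximalIdeal R).map (algebraMap R (R ⊗[A] D)) =
        (maximalIdeal A).map (algebraMap A (R ⊗[A] D)) := by
      rw [AdicCompletion.maximalIdeal_eq_map, Ideal.map_map]
      rfl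
    have h3 := valClosure_map
      (Algebra.TensorProduct.includeRight : D →ₐ[A] R ⊗[A] D).toRingHom I k hx
    rw [hmap, ← hmap'] at h3
    have h4 := hk h3
    rw [hmap', ← Ideal.map_pow] at h4
    rw [hI, ← Ideal.map_pow]
    exact mem_pow_of_completion (maximalIdeal A) n x h4
  have h3 : ∀ n, b ∈ ((maximalIdeal A) ^ n).map (algebraMap A (D ⊗[A] B)) := by
    intro n
    obtain ⟨k, hk⟩ := h2 n
    have := Ideal.map_mono hk (h1 k)
    rwa [hI, ← Ideal.map_pow, Ideal.map_map, ← IsScalarTower.algebraMap_eq] at this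
  let e := Algebra.TensorProduct.comm A D B
  apply e.injective
  rw [map_zero]
  apply IsHausdorff.haus (I := maximalIdeal B) (M := B ⊗[A] D) inferInstance
  intro n
  rw [SModEq.zero, Ideal.smul_top_eq_map]
  have h4 : e b ∈ (((maximalIdeal A) ^ n).map (algebraMap A (D ⊗[A] B))).map e.toAlgHom.toRingHom :=
    Ideal.mem_map_of_mem e.toAlgHom.toRingHom (h3 n)
  have h5 : (e.toAlgHom.toRingHom).comp (algebraMap A (D ⊗[A] B)) =
      (algebraMap B (B ⊗[A] D)).comp (algebraMap A B) := by
    ext a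
    rw [← IsScalarTower.algebraMap_eq A B (B ⊗[A] D)]
    exact AlgHom.commutes e.toAlgHom a
  rw [Ideal.map_map, h5, ← Ideal.map_map] at h4
  refine Ideal.map_mono ?_ h4
  rw [Ideal.map_pow]
  exact Ideal.pow_right_mono (((IsLocalRing.local_hom_TFAE (algebraMap A B)).out 0 2).mp ‹_›) n

theorem exists_smul_integral {A : Type u} [CommRing A] (p : Ideal A) [p.IsPrime]
    (L : Type u) [Field L] [Algebra p.ResidueField L] [FiniteDimensional p.ResidueField L]
    [Algebra A L] [IsScalarTower A p.ResidueField L] (l : L) :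
    ∃ s : A, algebraMap A L s ≠ 0 ∧ IsIntegral A (s • l) := by
  let _ : Algebra (A ⧸ p) L := ((algebraMap p.ResidueField L).comp
    (algebraMap (A ⧸ p) p.ResidueField)).toAlgebra
  have : IsScalarTower (A ⧸ p) p.ResidueField L := IsScalarTower.of_algebraMap_eq fun _ => rfl
  have : IsScalarTower A (A ⧸ p) L := IsScalarTower.of_algebraMap_eq fun a => by
    rw [IsScalarTower.algebraMap_apply A p.ResidueField L,
      IsScalarTower.algebraMap_apply A (A ⧸ p) p.ResidueField]
    rfl
  have halg : Algebra.IsAlgebraic (A ⧸ p) L :=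
    (IsFractionRing.comap_isAlgebraic_iff (K := p.ResidueField)).mpr inferInstance
  obtain ⟨y, hy0, hy⟩ := (halg.isAlgebraic l).exists_integral_multiple
  obtain ⟨s, rfl⟩ := Ideal.Quotient.mk_surjective y
  refine ⟨s, ?_, ?_⟩
  · rw [IsScalarTower.algebraMap_apply A (A ⧸ p) L,
      IsScalarTower.algebraMap_apply (A ⧸ p) p.ResidueField L]
    intro h
    rw [map_eq_zero] at h
    exact hy0 ((IsFractionRing.to_map_eq_zero_iff (K := p.ResidueField)).mp h)
  · have : Ideal.Quotient.mk p s • l = s • l := algebraMap_smul (A ⧸ p) s l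
    rw [this] at hy
    exact isIntegral_trans (R := A) (A := A ⧸ p) _ hy

theorem reduced_fiber {A : Type u} {B : Type v} [CommRing A] [CommRing B]
    [Algebra A B] [Module.Flat A B] (p : Ideal A) [p.IsPrime]
    (L : Type u) [Field L] [Algebra p.ResidueField L] [FiniteDimensional p.ResidueField L]
    [Algebra A L] [IsScalarTower A p.ResidueField L]
    (h : ∀ D : Subalgebra A (integralClosure A L), Module.Finite A D → IsReduced (B ⊗[A] D)) :
    IsReduced (B ⊗[A] L) := by
  have h0 : IsReduced (B ⊗[A] (integralClosure A L)) := by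
    apply IsReduced.tensorProduct_of_flat_of_forall_fg
    intro D hD
    have : Algebra.FiniteType A D := D.fg_iff_finiteType.mp hD
    have hInt : Algebra.IsIntegral A D := Algebra.IsIntegral.of_injective D.val Subtype.val_injective
    exact h D (Algebra.IsIntegral.finite)
  let ι : B ⊗[A] (integralClosure A L) →ₐ[A] B ⊗[A] L :=
    Algebra.TensorProduct.map (AlgHom.id A B) (integralClosure A L).val
  have hι : Function.Injective ι :=
    Module.Flat.lTensor_preserves_injective_linearMap (M := B) (integralClosure A L).val.toLinearMap
      Subtype.val_injective
  have hs : ∀ x : B ⊗[A] L, ∃ s : A, algebraMap A L s ≠ 0 ∧ s • x ∈ ι.range := by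
    intro x
    induction x using TensorProduct.induction_on with
    | zero => exact ⟨1, by simp, by rw [smul_zero]; exact zero_mem _⟩
    | tmul b l =>
      obtain ⟨s, hs, hsl⟩ := exists_smul_integral p L l
      exact ⟨s, hs, b ⊗ₜ ⟨s • l, hsl⟩, by simp [ι]⟩
    | add x y hx hy =>
      obtain ⟨s, hs, hx⟩ := hx
      obtain ⟨t, ht, hy⟩ := hy
      refine ⟨s * t, by rw [map_mul]; exact mul_ne_zero hs ht, ?_⟩
      rw [smul_add]
      refine add_mem ?_ ?_
      · rw [mul_comm, mul_smul]; exact Subalgebra.smul_mem _ hx t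
      · rw [mul_smul]; exact Subalgebra.smul_mem _ hy s
  refine ⟨fun x hx => ?_⟩
  obtain ⟨s, hs0, y, hy⟩ := hs x
  have hy' : ι y = s • x := hy
  have hyn : IsNilpotent y := by
    obtain ⟨n, hn⟩ := hx
    refine ⟨n, hι ?_⟩
    rw [map_pow, hy', smul_pow, hn, smul_zero, map_zero]
  have hy0 : s • x = 0 := by rw [← hy', hyn.eq_zero, map_zero]
  have hu : (1 ⊗ₜ[A] (algebraMap A L s)⁻¹ : B ⊗[A] L) * (s • x) = x := by
    have : s • x = (1 ⊗ₜ[A] algebraMap A L s : B ⊗[A] L) * x := by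
      rw [Algebra.smul_def]
      congr 1
      exact (AlgHom.commutes (Algebra.TensorProduct.includeRight : L →ₐ[A] B ⊗[A] L) s).symm
    rw [this, ← mul_assoc, Algebra.TensorProduct.tmul_mul_tmul, inv_mul_cancel₀ hs0, one_mul]
    exact one_mul x
  rw [← hu, hy0, mul_zero]

/-- **Statement 12 (localization theorem, reduced case).** Let `σ : A → B` be a flat
local homomorphism of Noetherian local commutative rings, `m` the maximal ideal of `A`.
If the formal fibers of `A` are geometrically reduced (for every prime `p` of `A`, the
fiber `κ(p) ⊗[A] Â` of `A → Â` is geometrically reduced over `κ(p)`), and the closed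
fiber `B ⧸ mB = κ(m) ⊗[A] B` is geometrically reduced over `A ⧸ m`, then `σ` is reduced:
for every prime `p` of `A`, the fiber `κ(p) ⊗[A] B` is geometrically reduced over
`κ(p)`. -/
theorem geometricallyReduced_fibers_of_closed_fiber
    (A B : Type*) [CommRing A] [CommRing B] [IsNoetherianRing A] [IsNoetherianRing B]
    [IsLocalRing A] [IsLocalRing B]
    [Algebra A B] [IsLocalHom (algebraMap A B)] [Module.Flat A B]
    (hformal : ∀ (p : Ideal A) (hp : p.IsPrime),
      haveI : p.IsPrime := hp
      GeometricallyReduced (ResidueField (Localization.AtPrime p))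
        (ResidueField (Localization.AtPrime p) ⊗[A] AdicCompletion (maximalIdeal A) A))
    (hfib : GeometricallyReduced (ResidueField A) (ResidueField A ⊗[A] B)) :
    ∀ (p : Ideal A) (hp : p.IsPrime),
      haveI : p.IsPrime := hp
      GeometricallyReduced (ResidueField (Localization.AtPrime p))
        (ResidueField (Localization.AtPrime p) ⊗[A] B) := by
  intro p hp L _ _ _
  let _ : Algebra A L := ((algebraMap p.ResidueField L).comp
    (algebraMap A p.ResidueField)).toAlgebra
  have : IsScalarTower A p.ResidueField L := IsScalarTower.of_algebraMap_eq fun _ => rfl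
  have hR0 : IsReduced (L ⊗[p.ResidueField] (p.ResidueField ⊗[A] AdicCompletion (maximalIdeal A) A)) :=
    hformal p hp L
  let e1 := Algebra.TensorProduct.cancelBaseChange A p.ResidueField p.ResidueField L
    (AdicCompletion (maximalIdeal A) A)
  let e1' := Algebra.TensorProduct.comm A L (AdicCompletion (maximalIdeal A) A)
  have hR1 : IsReduced (L ⊗[A] AdicCompletion (maximalIdeal A) A) :=
    isReduced_of_injective e1.symm e1.symm.injective
  have hR2 : IsReduced (AdicCompletion (maximalIdeal A) A ⊗[A] L) :=
    isReduced_of_injective e1'.symm e1'.symm.injective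
  let e2 := Algebra.TensorProduct.cancelBaseChange A p.ResidueField p.ResidueField L B
  let e2' := Algebra.TensorProduct.comm A L B
  suffices hB : IsReduced (B ⊗[A] L) by
    have hB1 : IsReduced (L ⊗[A] B) := isReduced_of_injective e2' e2'.injective
    exact isReduced_of_injective e2 e2.injective
  refine reduced_fiber p L fun D hD => ?_
  let j : D →ₐ[A] L := (integralClosure A L).val.comp D.val
  have hj : Function.Injective j := Subtype.val_injective.comp Subtype.val_injective
  have : IsReduced (AdicCompletion (maximalIdeal A) A ⊗[A] D) :=
    isReduced_of_injective
      (Algebra.TensorProduct.map (AlgHom.id A (AdicCompletion (maximalIdeal A) A)) j)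
      (Module.Flat.lTensor_preserves_injective_linearMap
        (M := AdicCompletion (maximalIdeal A) A) j.toLinearMap hj)
  exact reduced_of_finite hfib D
end

section
/- Let k be a perfect field and let A and B be two complete Noetherian local commutative rings containing k such that the completed tensor product A⊗̂_k B is Noetherian. If A and B are reduced, then A⊗̂_k B is reduced. -/
open TensorProduct


/-- The ideal `r = m ⊗ B + A ⊗ n` of `C = A ⊗[k] B`, where `m` and `n` are the Jacobson
radicals of `A` and `B` (for a local ring, the Jacobson radical is the maximal ideal). -/
noncomputable def tensorRadical (k A B : Type*) [Field k] [CommRing A] [CommRing B]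
    [Algebra k A] [Algebra k B] : Ideal (A ⊗[k] B) :=
  Ideal.map (Algebra.TensorProduct.includeLeft (R := k) (S := k) (A := A) (B := B))
      ((⊥ : Ideal A).jacobson) ⊔
    Ideal.map (Algebra.TensorProduct.includeRight (R := k) (A := A) (B := B))
      ((⊥ : Ideal B).jacobson)

/-- The completed tensor product `A ⊗̂[k] B`: the `r`-adic separated completion of
`C = A ⊗[k] B`, i.e. the inverse limit of the rings `C ⧸ r ^ i`. -/
noncomputable abbrev CompletedTensor (k A B : Type*) [Field k] [CommRing A] [CommRing B]
    [Algebra k A] [Algebra k B] : Type _ :=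
  AdicCompletion (tensorRadical k A B) (A ⊗[k] B)

universe u v

theorem isDomain_tensor_ratFunc (k F ι : Type*) [Field k] [Field F] [Algebra k F] :
    IsDomain (F ⊗[k] FractionRing (MvPolynomial ι k)) := by
  let R := MvPolynomial ι k
  let P := FractionRing R
  let e : F ⊗[k] R ≃ₐ[F] MvPolynomial ι F := MvPolynomial.algebraTensorAlgEquiv k F
  have hdom : IsDomain (F ⊗[k] R) := e.toMulEquiv.isDomain _
  let φ : F ⊗[k] R →ₐ[F] F ⊗[k] P := Algebra.TensorProduct.map (AlgHom.id F F)
    (IsScalarTower.toAlgHom k R P)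
  let : Algebra (F ⊗[k] R) (F ⊗[k] P) := φ.toRingHom.toAlgebra
  have : IsScalarTower F (F ⊗[k] R) (F ⊗[k] P) := .of_algebraMap_eq' (φ.comp_algebraMap).symm
  have hloc := IsLocalization.tensorProduct_tensorProduct_right k F (nonZeroDivisors R) P (by
    ext x <;> simp [RingHom.algebraMap_toAlgebra, φ])
  refine IsLocalization.isDomain_of_le_nonZeroDivisors (R := F ⊗[k] R) (S := F ⊗[k] P)
    (M := (nonZeroDivisors R).map
      (Algebra.TensorProduct.includeRight (R := k) (A := F))) ?_
  rintro _ ⟨x, hx, rfl⟩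
  apply mem_nonZeroDivisors_of_ne_zero
  have hinj : Function.Injective (Algebra.TensorProduct.includeRight : R →ₐ[k] F ⊗[k] R) :=
    Algebra.TensorProduct.includeRight_injective (RingHom.injective _)
  exact (map_ne_zero_iff _ hinj).mpr (nonZeroDivisors.ne_zero hx)

theorem isReduced_tensor_sep (k P F G : Type*) [Field k] [Field P] [Field F] [Field G]
    [Algebra k P] [Algebra k F] [Algebra k G] [Algebra P G] [IsScalarTower k P G]
    [Algebra.EssFiniteType k G] [Algebra.IsSeparable P G] [IsDomain (P ⊗[k] F)] :
    IsReduced (F ⊗[k] G) := by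
  let D := FractionRing (P ⊗[k] F)
  have : Algebra.EssFiniteType P G := .of_comp k P G
  have : Algebra.FormallyEtale P G := .of_isSeparable P G
  have hred : IsReduced (D ⊗[P] G) := Algebra.FormallyUnramified.isReduced_of_field D _
  let f := IsScalarTower.toAlgHom P (P ⊗[k] F) D
  have hf : Function.Injective f := IsFractionRing.injective (P ⊗[k] F) D
  have h1 : Function.Injective (Algebra.TensorProduct.map f (AlgHom.id P G)) :=
    Module.Flat.rTensor_preserves_injective_linearMap (M := G) f.toLinearMap hf
  have hred2 : IsReduced ((P ⊗[k] F) ⊗[P] G) := isReduced_of_injective _ h1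
  let e1 := (Algebra.TensorProduct.cancelBaseChange k P P G F).symm
  let e2 := Algebra.TensorProduct.comm P G (P ⊗[k] F)
  let e3 := Algebra.TensorProduct.comm k F G
  have hred3 : IsReduced (G ⊗[k] F) := isReduced_of_injective (e1.trans e2) (e1.trans e2).injective
  exact isReduced_of_injective e3 e3.injective

theorem isReduced_tensor_field_aux (k F G : Type*) [Field k] [PerfectField k] [Field F] [Field G]
    [Algebra k F] [Algebra k G] [Algebra.EssFiniteType k G] : IsReduced (F ⊗[k] G) := by
  obtain ⟨s, hs, hsep⟩ := exists_isTranscendenceBasis_and_isSeparable_of_perfectField k G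
  let P := IntermediateField.adjoin k (s : Set G)
  have hr : Set.range ((↑) : s → G) = (s : Set G) := by simp
  let e : FractionRing (MvPolynomial s k) ≃ₐ[k] P :=
    (hs.1.aevalEquivField).trans (IntermediateField.equivOfEq (by rw [hr]))
  have hdom : IsDomain (P ⊗[k] F) := by
    have := isDomain_tensor_ratFunc k F s
    exact ((Algebra.TensorProduct.comm k P F).trans
      (Algebra.TensorProduct.congr (AlgEquiv.refl (R := k) (A₁ := F)) e).symm).toMulEquiv.isDomain _
  exact isReduced_tensor_sep k P F G

theorem isReduced_tensor_field (k F G : Type*) [Field k] [PerfectField k] [Field F] [Field G]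
    [Algebra k F] [Algebra k G] : IsReduced (F ⊗[k] G) := by
  apply IsReduced.tensorProduct_of_flat_of_forall_fg
  intro B hB
  have : Algebra.FiniteType k B := B.fg_iff_finiteType.mp hB
  have : Algebra.EssFiniteType k (FractionRing B) := .comp k B _
  have := isReduced_tensor_field_aux k F (FractionRing B)
  exact isReduced_of_injective (Algebra.TensorProduct.map (AlgHom.id k F)
    (IsScalarTower.toAlgHom k B (FractionRing B)))
    (Module.Flat.lTensor_preserves_injective_linearMap (M := F)
      (IsScalarTower.toAlgHom k B (FractionRing B)).toLinearMap (IsFractionRing.injective _ _))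

open IsLocalRing in
theorem dcc_above_pow {A : Type*} [CommRing A] [IsNoetherianRing A] [IsLocalRing A] (N : ℕ)
    (S : Set (Ideal A)) (hS : S.Nonempty) (h : ∀ J ∈ S, maximalIdeal A ^ N ≤ J) :
    ∃ J ∈ S, ∀ J' ∈ S, J' ≤ J → J' = J := by
  let I := maximalIdeal A ^ (N + 1)
  have hI : ∀ J ∈ S, I ≤ J := fun J hJ => (Ideal.pow_le_pow_right (Nat.le_succ N)).trans (h J hJ)
  have : IsArtinianRing (A ⧸ I) := by
    apply quotient_artinian_of_mem_minimalPrimes_of_isLocalRing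
    refine ⟨⟨inferInstance, Ideal.pow_le_self (Nat.succ_ne_zero N)⟩, ?_⟩
    rintro q ⟨hq, hq2⟩ -
    exact hq.le_of_pow_le hq2
  have hcm : ∀ J ∈ S, (J.map (Ideal.Quotient.mk I)).comap (Ideal.Quotient.mk I) = J := by
    intro J hJ
    rw [Ideal.comap_map_of_surjective _ Ideal.Quotient.mk_surjective, ← RingHom.ker_eq_comap_bot,
      Ideal.mk_ker, sup_eq_left]
    exact hI J hJ
  let S' : Set (Ideal (A ⧸ I)) := {J | J.comap (Ideal.Quotient.mk I) ∈ S}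
  obtain ⟨J0, hJ0⟩ := hS
  have hS' : S'.Nonempty := ⟨J0.map (Ideal.Quotient.mk I), by
    change Ideal.comap _ _ ∈ S
    rwa [hcm J0 hJ0]⟩
  obtain ⟨m, hm, hmin⟩ := WellFounded.has_min (wellFounded_lt (α := Ideal (A ⧸ I))) S' hS'
  refine ⟨_, hm, fun J' hJ' hle => ?_⟩
  have h1 : J'.map (Ideal.Quotient.mk I) ≤ m := Ideal.map_le_iff_le_comap.mpr hle
  have h2 : J'.map (Ideal.Quotient.mk I) ∈ S' := by
    change Ideal.comap _ _ ∈ S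
    rwa [hcm J' hJ']
  rcases h1.lt_or_eq with h3 | h3
  · exact absurd h3 (hmin _ h2)
  · rw [← h3, hcm J' hJ']

open IsLocalRing in
theorem chevalley_ideals {A : Type*} [CommRing A] [IsNoetherianRing A] [IsLocalRing A]
    [IsAdicComplete (maximalIdeal A) A] (S : Set (Ideal A))
    (hS : ∀ x, (∀ J ∈ S, x ∈ J) → x = 0) (M : ℕ) :
    ∃ T : Finset (Ideal A), (T : Set (Ideal A)) ⊆ S ∧ T.inf id ≤ maximalIdeal A ^ M := by
  classical
  have key : ∀ N : ℕ, ∃ T : Finset (Ideal A), (T : Set (Ideal A)) ⊆ S ∧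
      ∀ T' : Finset (Ideal A), (T' : Set (Ideal A)) ⊆ S →
        T.inf id ⊔ maximalIdeal A ^ N ≤ T'.inf id ⊔ maximalIdeal A ^ N := by
    intro N
    obtain ⟨_, ⟨T, hT, rfl⟩, hmin⟩ := dcc_above_pow N
      {J | ∃ T : Finset (Ideal A), (T : Set (Ideal A)) ⊆ S ∧ J = T.inf id ⊔ maximalIdeal A ^ N}
      ⟨_, ∅, by simp, rfl⟩ (by rintro _ ⟨T, hT, rfl⟩; exact le_sup_right)
    refine ⟨T, hT, fun T' hT' => ?_⟩
    have := hmin _ ⟨T ∪ T', by simp [hT, hT'], rfl⟩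
      (sup_le_sup_right (Finset.inf_mono Finset.subset_union_left) _)
    rw [← this]
    exact sup_le_sup_right (Finset.inf_mono Finset.subset_union_right) _
  choose T hT hmin using key
  by_contra! hcon
  obtain ⟨x0, hx0, hx0'⟩ := SetLike.not_le_iff_exists.mp (hcon (T M) (hT M))
  have step : ∀ N : ℕ, ∀ x ∈ (T N).inf id ⊔ maximalIdeal A ^ N,
      ∃ y ∈ (T (N + 1)).inf id ⊔ maximalIdeal A ^ (N + 1), y - x ∈ maximalIdeal A ^ N := by
    intro N x hx
    obtain ⟨u, hu, v, hv, rfl⟩ := Submodule.mem_sup.mp (hmin N (T (N + 1)) (hT (N + 1)) hx)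
    exact ⟨u, Ideal.mem_sup_left hu, by simpa using hv⟩
  choose g hg hg' using step
  let s : ∀ i : ℕ, {x : A // x ∈ (T (M + i)).inf id ⊔ maximalIdeal A ^ (M + i)} := fun i =>
    Nat.rec ⟨x0, Ideal.mem_sup_left hx0⟩ (fun i x => ⟨g (M + i) x.1 x.2, hg (M + i) x.1 x.2⟩) i
  have hs0 : (s 0).1 = x0 := rfl
  have hs : ∀ i, (s (i + 1)).1 - (s i).1 ∈ maximalIdeal A ^ (M + i) :=
    fun i => hg' (M + i) (s i).1 (s i).2
  have hs2 : ∀ i j, (s (i + j)).1 - (s i).1 ∈ maximalIdeal A ^ (M + i) := by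
    intro i j
    induction j with
    | zero => simp
    | succ j ih =>
      have h1 := Ideal.pow_le_pow_right (I := maximalIdeal A) (by omega : M + i ≤ M + (i + j))
        (hs (i + j))
      have := Ideal.add_mem _ h1 ih
      rw [sub_add_sub_cancel] at this
      exact this
  obtain ⟨L, hL⟩ := IsPrecomplete.prec (I := maximalIdeal A) (M := A) inferInstance
    (f := fun i => (s i).1) (by
      intro i j hij
      obtain ⟨j, rfl⟩ := Nat.exists_eq_add_of_le hij
      rw [SModEq.comm, SModEq.sub_mem, smul_eq_mul, Ideal.mul_top]
      exact Ideal.pow_le_pow_right (Nat.le_add_left i M) (hs2 i j))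
  have hL' : ∀ i, L - (s i).1 ∈ maximalIdeal A ^ (M + i) := by
    intro i
    have h1 := hL (i + M)
    rw [SModEq.comm, SModEq.sub_mem, smul_eq_mul, Ideal.mul_top, add_comm i M] at h1
    have := Ideal.add_mem _ h1 (by rw [add_comm M i]; rw [← add_comm M i]; exact add_comm i M ▸ hs2 i M)
    rwa [sub_add_sub_cancel] at this
  have hL0 : L = 0 := by
    apply hS
    intro J hJ
    have hmem : ∀ i, L ∈ J ⊔ maximalIdeal A ^ (M + i) := by
      intro i
      have h1 : L ∈ (T (M + i)).inf id ⊔ maximalIdeal A ^ (M + i) := by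
        have := Ideal.add_mem _ (Ideal.mem_sup_right (hL' i)) (s i).2
        rwa [sub_add_cancel] at this
      simpa using hmin (M + i) {J} (by simpa using hJ) h1
    have hk := Ideal.iInf_pow_smul_eq_bot_of_isLocalRing (M := A ⧸ J) (maximalIdeal A)
      (maximalIdeal.isMaximal A).ne_top
    rw [← Ideal.Quotient.eq_zero_iff_mem, ← Submodule.mem_bot A, ← hk, Submodule.mem_iInf]
    intro i
    obtain ⟨u, hu, v, hv, huv⟩ := Submodule.mem_sup.mp (hmem i)
    rw [← huv, map_add, Ideal.Quotient.eq_zero_iff_mem.mpr hu, zero_add]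
    have : Ideal.Quotient.mk J v = v • (1 : A ⧸ J) := by
      rw [Algebra.smul_def, mul_one]; rfl
    rw [this]
    exact Submodule.smul_mem_smul (Ideal.pow_le_pow_right (Nat.le_add_left i M) hv) trivial
  apply hx0'
  have := hL' 0
  rw [hL0, hs0] at this
  simpa using this

open IsLocalRing in
theorem maximalIdeal_le_radical {R : Type*} [CommRing R] [IsDomain R] [IsNoetherianRing R]
    [IsLocalRing R] (a : R) (ha : a ≠ 0) (h : ∀ q : Ideal R, q.IsPrime → q ≠ ⊥ → a ∈ q) :
    maximalIdeal R ≤ (Ideal.span {a}).radical := by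
  by_contra hcon
  have hfin := Ideal.finite_minimalPrimes_of_isNoetherianRing R (Ideal.span {a})
  have h1 : ∀ q ∈ (Ideal.span {a}).minimalPrimes, ¬ maximalIdeal R ≤ q := by
    intro q hq hle
    apply hcon
    rw [← Ideal.sInf_minimalPrimes]
    refine le_sInf fun q' hq' => ?_
    have hq'p := hq'.1.1
    have : q' ≤ q := (le_maximalIdeal hq'p.ne_top).trans hle
    exact hle.trans (hq.2 hq'.1 this)
  have h2 : ¬ ((maximalIdeal R : Set R) ⊆ ⋃ q ∈ (hfin.toFinset : Set (Ideal R)), (q : Set R)) := by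
    rw [Ideal.subset_union_prime ⊥ ⊥ (fun q hq _ _ => (hfin.mem_toFinset.mp hq).1.1)]
    rintro ⟨q, hq, hle⟩
    exact h1 q (hfin.mem_toFinset.mp hq) hle
  obtain ⟨b, hb, hb'⟩ := Set.not_subset.mp h2
  simp only [Set.mem_iUnion, not_exists] at hb'
  have hbm : Ideal.span {b} ≤ maximalIdeal R := by
    rwa [Ideal.span_singleton_le_iff_mem]
  obtain ⟨q, hq, -⟩ := Ideal.exists_minimalPrimes_le hbm
  have hqp := hq.1.1
  have hbq : b ∈ q := (Ideal.span_singleton_le_iff_mem _).mp hq.1.2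
  have hqh := Ideal.height_le_one_of_isPrincipal_of_mem_minimalPrimes _ _ hq
  have hq0 : ∀ q' : Ideal R, q' ∈ (Ideal.span {a}).minimalPrimes → q' ≠ ⊥ := by
    rintro q' hq' rfl
    exact ha (by simpa using hq'.1.2)
  have hb0 : b ≠ 0 := by
    rintro rfl
    have hat : Ideal.span {a} ≠ ⊤ := by
      intro ht
      exact hcon (by rw [ht, Ideal.radical_top]; exact le_top)
    obtain ⟨q', hq', -⟩ := Ideal.exists_minimalPrimes_le (le_maximalIdeal hat)
    exact hb' q' (hfin.mem_toFinset.mpr hq') (zero_mem q')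
  have haq : a ∈ q := h q hqp (by rintro rfl; exact hb0 (by simpa using hbq))
  obtain ⟨q', hq', hle⟩ := Ideal.exists_minimalPrimes_le
    ((Ideal.span_singleton_le_iff_mem q).mpr haq)
  have hq'p := hq'.1.1
  have hlt : q' < q := lt_of_le_of_ne hle (by
    rintro rfl
    exact hb' q' (hfin.mem_toFinset.mpr hq') hbq)
  have h3 := Ideal.height_le_iff.mp hqh q' hq'p hlt
  have h4 : q'.height ≤ 0 := (Order.lt_one_iff.mp h3).le
  have h5 := Ideal.height_le_iff.mp h4 ⊥ Ideal.isPrime_bot (bot_lt_iff_ne_bot.mpr (hq0 q' hq'))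
  exact not_lt_zero h5

open IsLocalRing in
theorem exists_valuationRing_map {A : Type u} [CommRing A] [IsNoetherianRing A] [IsLocalRing A]
    [IsReduced A] (a : A) (ha : a ≠ 0) :
    ∃ (V : Type u) (_ : CommRing V) (_ : IsDomain V) (_ : ValuationRing V) (f : A →+* V),
      f a ≠ 0 ∧ IsLocalHom f ∧ ∃ N : ℕ, ∀ x ∈ maximalIdeal A ^ N, f a ∣ f x := by
  have hne : {p : Ideal A | p.IsPrime ∧ a ∉ p}.Nonempty := by
    by_contra hcon
    rw [Set.not_nonempty_iff_eq_empty] at hcon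
    apply ha
    have : a ∈ nilradical A := by
      rw [nilradical_eq_sInf, Ideal.mem_sInf]
      intro p hp
      by_contra hap
      exact Set.eq_empty_iff_forall_notMem.mp hcon p ⟨hp, hap⟩
    rwa [nilradical_eq_zero] at this
  obtain ⟨p, ⟨hp, hap⟩, hmax⟩ := WellFounded.has_min (wellFounded_gt (α := Ideal A)) _ hne
  let R := A ⧸ p
  have : IsLocalRing R := IsLocalRing.of_surjective' (Ideal.Quotient.mk p) Ideal.Quotient.mk_surjective
  have hloc : IsLocalHom (Ideal.Quotient.mk p) :=
    IsLocalHom.of_surjective _ Ideal.Quotient.mk_surjective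
  have ha' : Ideal.Quotient.mk p a ≠ 0 := by
    rwa [Ne, Ideal.Quotient.eq_zero_iff_mem]
  have hrad := maximalIdeal_le_radical (R := R) (Ideal.Quotient.mk p a) ha' (by
    intro q hq hq0
    by_contra haq
    refine hmax (q.comap (Ideal.Quotient.mk p)) ⟨hq.comap _, haq⟩ ?_
    refine lt_of_le_of_ne ?_ ?_
    · intro x hx
      rw [Ideal.mem_comap, Ideal.Quotient.eq_zero_iff_mem.mpr hx]
      exact zero_mem q
    · intro he
      apply hq0
      rw [eq_bot_iff]
      intro x hx
      obtain ⟨x, rfl⟩ := Ideal.Quotient.mk_surjective x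
      have : x ∈ p := by rw [he]; exact hx
      exact Ideal.Quotient.eq_zero_iff_mem.mpr this)
  obtain ⟨N, hN⟩ := Ideal.exists_pow_le_of_le_radical_of_fg hrad (IsNoetherian.noetherian _)
  let g : R →+* FractionRing R := algebraMap R (FractionRing R)
  obtain ⟨V, hV, hVl⟩ := IsLocalRing.exists_factor_valuationRing g
  let g' : R →+* V := g.codRestrict V.toSubring hV
  have : IsLocalHom g' := hVl
  refine ⟨V, inferInstance, inferInstance, inferInstance, g'.comp (Ideal.Quotient.mk p),
    ?_, inferInstance, N, ?_⟩
  · intro h0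
    apply ha'
    have : g (Ideal.Quotient.mk p a) = 0 := congrArg Subtype.val h0
    exact (map_eq_zero_iff g (IsFractionRing.injective R (FractionRing R))).mp this
  · intro x hx
    have h1 : Ideal.Quotient.mk p x ∈ maximalIdeal R ^ N := by
      have h2 := Ideal.mem_map_of_mem (Ideal.Quotient.mk p) hx
      rw [Ideal.map_pow] at h2
      refine Ideal.pow_right_mono ?_ N h2
      exact ((local_hom_TFAE (Ideal.Quotient.mk p)).out 0 2).mp hloc
    exact map_dvd g' (Ideal.mem_span_singleton.mp (hN h1))

/-- The ideal `I ⊗ B + A ⊗ J` of `A ⊗ B`. -/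
noncomputable def tq (k : Type*) {A B : Type*} [Field k] [CommRing A] [CommRing B]
    [Algebra k A] [Algebra k B] (I : Ideal A) (J : Ideal B) : Ideal (A ⊗[k] B) :=
  I.map (Algebra.TensorProduct.includeLeft (R := k) (S := k) (A := A) (B := B)) ⊔
    J.map (Algebra.TensorProduct.includeRight (R := k) (A := A) (B := B))

section tq

variable {k A B V W : Type*} [Field k] [CommRing A] [CommRing B] [CommRing V] [CommRing W]
  [Algebra k A] [Algebra k B] [Algebra k V] [Algebra k W]

theorem mem_tq_iff (I : Ideal A) (J : Ideal B) (x : A ⊗[k] B) :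
    x ∈ tq k I J ↔
      Algebra.TensorProduct.map (Ideal.Quotient.mkₐ k I) (Ideal.Quotient.mkₐ k J) x = 0 := by
  have hI : RingHom.ker (Ideal.Quotient.mkₐ k I) = I := by
    ext; simp [RingHom.mem_ker, Ideal.Quotient.eq_zero_iff_mem]
  have hJ : RingHom.ker (Ideal.Quotient.mkₐ k J) = J := by
    ext; simp [RingHom.mem_ker, Ideal.Quotient.eq_zero_iff_mem]
  rw [← RingHom.mem_ker, Algebra.TensorProduct.map_ker _ _ (Ideal.Quotient.mkₐ_surjective k I)
    (Ideal.Quotient.mkₐ_surjective k J), hI, hJ]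
  rfl

theorem tq_mono {I I' : Ideal A} {J J' : Ideal B} (h : I ≤ I') (h' : J ≤ J') :
    tq k I J ≤ tq k I' J' :=
  sup_le_sup (Ideal.map_mono h) (Ideal.map_mono h')

theorem tq_top_left (J : Ideal B) : tq k (⊤ : Ideal A) J = ⊤ := by
  rw [tq, Ideal.map_top, top_sup_eq]

theorem tq_top_right (I : Ideal A) : tq k I (⊤ : Ideal B) = ⊤ := by
  rw [tq, Ideal.map_top, sup_top_eq]

theorem mem_tq_comap (f : A →ₐ[k] V) (g : B →ₐ[k] W) (I : Ideal V) (J : Ideal W) (x : A ⊗[k] B) :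
    x ∈ tq k (I.comap f) (J.comap g) ↔ Algebra.TensorProduct.map f g x ∈ tq k I J := by
  rw [mem_tq_iff, mem_tq_iff]
  let f' : A ⧸ I.comap f →ₐ[k] V ⧸ I := Ideal.quotientMapₐ I f le_rfl
  let g' : B ⧸ J.comap g →ₐ[k] W ⧸ J := Ideal.quotientMapₐ J g le_rfl
  have hf : Function.Injective f' := Ideal.quotientMap_injective
  have hg : Function.Injective g' := Ideal.quotientMap_injective
  have hinj : Function.Injective (Algebra.TensorProduct.map f' g') :=
    TensorProduct.map_injective_of_flat_flat f'.toLinearMap g'.toLinearMap hf hg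
  have hcomm : (Algebra.TensorProduct.map f' g').comp (Algebra.TensorProduct.map
      (Ideal.Quotient.mkₐ k (I.comap f)) (Ideal.Quotient.mkₐ k (J.comap g))) =
      (Algebra.TensorProduct.map (Ideal.Quotient.mkₐ k I) (Ideal.Quotient.mkₐ k J)).comp
        (Algebra.TensorProduct.map f g) := by
    ext x <;> simp [f', g']
  rw [← map_eq_zero_iff _ hinj]
  exact Eq.congr_left (DFunLike.congr_fun hcomm x)

theorem tq_inf_left (I₁ I₂ : Ideal A) (J : Ideal B) (x : A ⊗[k] B) (h₁ : x ∈ tq k I₁ J)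
    (h₂ : x ∈ tq k I₂ J) : x ∈ tq k (I₁ ⊓ I₂) J := by
  let f : A →ₐ[k] (A ⧸ I₁) × (A ⧸ I₂) :=
    (Ideal.Quotient.mkₐ k I₁).prod (Ideal.Quotient.mkₐ k I₂)
  have hker : (⊥ : Ideal ((A ⧸ I₁) × (A ⧸ I₂))).comap f = I₁ ⊓ I₂ := by
    ext y
    simp [f, Ideal.Quotient.eq_zero_iff_mem]
  have h := mem_tq_comap f (AlgHom.id k B) ⊥ J x
  have hJ : J.comap (AlgHom.id k B) = J := rfl
  rw [hker, hJ] at h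
  rw [h, mem_tq_iff]
  rw [mem_tq_iff] at h₁ h₂
  let e : (((A ⧸ I₁) × (A ⧸ I₂)) ⧸ (⊥ : Ideal ((A ⧸ I₁) × (A ⧸ I₂)))) ≃ₐ[k]
    (A ⧸ I₁) × (A ⧸ I₂) := AlgEquiv.quotientBot k _
  let F : (((A ⧸ I₁) × (A ⧸ I₂)) ⧸ (⊥ : Ideal ((A ⧸ I₁) × (A ⧸ I₂)))) ⊗[k] (B ⧸ J) ≃ₗ[k]
      ((A ⧸ I₁) ⊗[k] (B ⧸ J)) × ((A ⧸ I₂) ⊗[k] (B ⧸ J)) :=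
    (TensorProduct.congr e.toLinearEquiv (LinearEquiv.refl k _)).trans
      (TensorProduct.prodLeft k k (A ⧸ I₁) (A ⧸ I₂) (B ⧸ J))
  apply F.injective
  rw [LinearEquiv.map_zero]
  have key : ∀ y : A ⊗[k] B, F (Algebra.TensorProduct.map (Ideal.Quotient.mkₐ k ⊥)
      (Ideal.Quotient.mkₐ k J) (Algebra.TensorProduct.map f (AlgHom.id k B) y)) =
      (Algebra.TensorProduct.map (Ideal.Quotient.mkₐ k I₁) (Ideal.Quotient.mkₐ k J) y,
       Algebra.TensorProduct.map (Ideal.Quotient.mkₐ k I₂) (Ideal.Quotient.mkₐ k J) y) := by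
    have := TensorProduct.ext' (g := F.toLinearMap ∘ₗ (Algebra.TensorProduct.map
        (Ideal.Quotient.mkₐ k ⊥) (Ideal.Quotient.mkₐ k J)).toLinearMap ∘ₗ
        (Algebra.TensorProduct.map f (AlgHom.id k B)).toLinearMap)
      (h := LinearMap.prod
        (Algebra.TensorProduct.map (Ideal.Quotient.mkₐ k I₁) (Ideal.Quotient.mkₐ k J)).toLinearMap
        (Algebra.TensorProduct.map (Ideal.Quotient.mkₐ k I₂) (Ideal.Quotient.mkₐ k J)).toLinearMap)
      (fun a b => rfl)
    exact fun y => LinearMap.congr_fun this y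
  rw [key, h₁, h₂]
  rfl

theorem mem_tq_comm (I : Ideal A) (J : Ideal B) (x : A ⊗[k] B) (h : x ∈ tq k I J) :
    Algebra.TensorProduct.comm k A B x ∈ tq k J I := by
  let e := (Algebra.TensorProduct.comm k A B).toAlgHom
  have : tq k I J ≤ (tq k J I).comap e := by
    refine sup_le ?_ ?_
    · rw [Ideal.map_le_iff_le_comap]
      intro a ha
      have : e (a ⊗ₜ 1) ∈ tq k J I := by
        change (1 : B) ⊗ₜ[k] a ∈ tq k J I
        exact Ideal.mem_sup_right (Ideal.mem_map_of_mem
          (Algebra.TensorProduct.includeRight (R := k) (A := B) (B := A)) ha)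
      exact this
    · rw [Ideal.map_le_iff_le_comap]
      intro b hb
      have : e (1 ⊗ₜ b) ∈ tq k J I := by
        change b ⊗ₜ[k] (1 : A) ∈ tq k J I
        exact Ideal.mem_sup_left (Ideal.mem_map_of_mem
          (Algebra.TensorProduct.includeLeft (R := k) (S := k) (A := B) (B := A)) hb)
      exact this
  exact this h

theorem tq_inf_right (I : Ideal A) (J₁ J₂ : Ideal B) (x : A ⊗[k] B) (h₁ : x ∈ tq k I J₁)
    (h₂ : x ∈ tq k I J₂) : x ∈ tq k I (J₁ ⊓ J₂) := by
  have := mem_tq_comm _ _ _ (tq_inf_left J₁ J₂ I _ (mem_tq_comm _ _ _ h₁) (mem_tq_comm _ _ _ h₂))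
  rwa [← Algebra.TensorProduct.comm_symm, AlgEquiv.symm_apply_apply] at this

theorem tq_finset_inf (S : Finset (Ideal A)) (T : Finset (Ideal B)) (x : A ⊗[k] B)
    (h : ∀ I ∈ S, ∀ J ∈ T, x ∈ tq k I J) : x ∈ tq k (S.inf id) (T.inf id) := by
  classical
  have h1 : ∀ I ∈ S, x ∈ tq k I (T.inf id) := by
    intro I hI
    have h' := h I hI
    clear h
    induction T using Finset.induction_on with
    | empty => simp [tq_top_right]
    | insert J T _ ih =>
      rw [Finset.inf_insert]
      exact tq_inf_right _ _ _ _ (h' J (Finset.mem_insert_self _ _))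
        (ih fun J' hJ' => h' J' (Finset.mem_insert_of_mem hJ'))
  clear h
  induction S using Finset.induction_on with
  | empty => simp [tq_top_left]
  | insert J S _ ih =>
    rw [Finset.inf_insert]
    exact tq_inf_left _ _ _ _ (h1 J (Finset.mem_insert_self _ _))
      (ih fun J' hJ' => h1 J' (Finset.mem_insert_of_mem hJ'))

/-- Multiplication by `c` as an injection `V / I → V / cI`. -/
theorem exists_mul_quot [IsDomain V] (I : Ideal V) (c : V) (hc : c ≠ 0) :
    ∃ μ : V ⧸ I →ₗ[k] V ⧸ (I * Ideal.span {c}), Function.Injective μ ∧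
      ∀ x, μ (Ideal.Quotient.mk _ x) = Ideal.Quotient.mk _ (c * x) := by
  let μ : V ⧸ I →ₗ[V] V ⧸ (I * Ideal.span {c}) :=
    Submodule.mapQ I (I * Ideal.span {c}) (LinearMap.mulLeft V c) (by
      intro x hx
      have := Ideal.mul_mem_mul hx (Ideal.mem_span_singleton_self c)
      rwa [mul_comm x c] at this)
  have hμ : ∀ x, μ (Ideal.Quotient.mk _ x) = Ideal.Quotient.mk _ (c * x) := fun x => rfl
  refine ⟨μ.restrictScalars k, ?_, hμ⟩
  rw [injective_iff_map_eq_zero]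
  intro x hx
  obtain ⟨x, rfl⟩ := Ideal.Quotient.mk_surjective x
  have hx' : μ (Ideal.Quotient.mk _ x) = 0 := hx
  rw [hμ, Ideal.Quotient.eq_zero_iff_mem, Ideal.mem_mul_span_singleton] at hx'
  obtain ⟨y, hy, hyx⟩ := hx'
  rw [mul_comm y c] at hyx
  rw [← mul_left_cancel₀ hc hyx]
  exact Ideal.Quotient.eq_zero_iff_mem.mpr hy

theorem tq_cancel [IsDomain V] [IsDomain W] (I : Ideal V) (J : Ideal W) (c : V) (d : W)
    (hc : c ≠ 0) (hd : d ≠ 0) (t : V ⊗[k] W)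
    (h : (c ⊗ₜ[k] d) * t ∈ tq k (I * Ideal.span {c}) (J * Ideal.span {d})) : t ∈ tq k I J := by
  obtain ⟨μ, hμ, hμ'⟩ := exists_mul_quot (k := k) I c hc
  obtain ⟨ν, hν, hν'⟩ := exists_mul_quot (k := k) J d hd
  rw [mem_tq_iff] at h ⊢
  have hinj := TensorProduct.map_injective_of_flat_flat μ ν hμ hν
  apply hinj
  have key : ∀ t : V ⊗[k] W, TensorProduct.map μ ν (Algebra.TensorProduct.map
      (Ideal.Quotient.mkₐ k I) (Ideal.Quotient.mkₐ k J) t) =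
      Algebra.TensorProduct.map (Ideal.Quotient.mkₐ k (I * Ideal.span {c}))
        (Ideal.Quotient.mkₐ k (J * Ideal.span {d})) ((c ⊗ₜ[k] d) * t) := by
    intro t
    induction t using TensorProduct.induction_on with
    | zero => simp
    | tmul a b =>
      rw [Algebra.TensorProduct.tmul_mul_tmul, Algebra.TensorProduct.map_tmul,
        Algebra.TensorProduct.map_tmul, TensorProduct.map_tmul]
      exact congrArg₂ _ (hμ' a) (hν' b)
    | add y y' h1 h2 => rw [map_add, map_add, h1, h2, mul_add, map_add]
  rw [map_zero, key, h]

end tq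

section tq2

variable {k V W : Type*} [Field k] [CommRing V] [CommRing W] [Algebra k V] [Algebra k W]

theorem mem_tq_mono {I I' : Ideal V} {J J' : Ideal W} {x : V ⊗[k] W} (hx : x ∈ tq k I J)
    (h : I ≤ I') (h' : J ≤ J') : x ∈ tq k I' J' :=
  tq_mono h h' hx

theorem tq_decomp (I : Ideal V) (J : Ideal W) (z : V ⊗[k] W) (h : z ∈ tq k I J) :
    ∃ p ∈ tq k I ⊥, ∃ q ∈ tq k ⊥ J, p + q = z := by
  unfold tq at h ⊢
  obtain ⟨p, hp, q, hq, hpq⟩ := Submodule.mem_sup.mp h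
  exact ⟨p, Ideal.mem_sup_left hp, q, Ideal.mem_sup_right hq, hpq⟩

theorem tq_span_left (c : V) (z : V ⊗[k] W) (h : z ∈ tq k (Ideal.span {c}) ⊥) :
    ∃ t, z = (c ⊗ₜ[k] (1 : W)) * t := by
  rw [tq, Ideal.map_bot, sup_bot_eq, Ideal.map_span, Set.image_singleton,
    Ideal.mem_span_singleton] at h
  exact h

theorem tq_span_right (c : W) (z : V ⊗[k] W) (h : z ∈ tq k ⊥ (Ideal.span {c})) :
    ∃ t, z = ((1 : V) ⊗ₜ[k] c) * t := by
  rw [tq, Ideal.map_bot, bot_sup_eq, Ideal.map_span, Set.image_singleton,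
    Ideal.mem_span_singleton] at h
  exact h

theorem tq_mul_left (I : Ideal V) (c : V) (z : V ⊗[k] W) (h : z ∈ tq k I ⊥) :
    (c ⊗ₜ[k] (1 : W)) * z ∈ tq k (I * Ideal.span {c}) ⊥ := by
  rw [tq, Ideal.map_bot, sup_bot_eq] at h ⊢
  rw [Ideal.map_mul, mul_comm _ z]
  exact Ideal.mul_mem_mul h (Ideal.mem_map_of_mem _ (Ideal.mem_span_singleton_self c))

theorem tq_mul_right (I : Ideal W) (c : W) (z : V ⊗[k] W) (h : z ∈ tq k ⊥ I) :
    ((1 : V) ⊗ₜ[k] c) * z ∈ tq k ⊥ (I * Ideal.span {c}) := by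
  rw [tq, Ideal.map_bot, bot_sup_eq] at h ⊢
  rw [Ideal.map_mul, mul_comm _ z]
  exact Ideal.mul_mem_mul h (Ideal.mem_map_of_mem
    (Algebra.TensorProduct.includeRight (R := k) (A := V) (B := W)) (Ideal.mem_span_singleton_self c))

open IsLocalRing in
theorem tq_max_reduced [PerfectField k] [IsLocalRing V] [IsLocalRing W] (y : V ⊗[k] W)
    (hy2 : y ^ 2 ∈ tq k (maximalIdeal V) (maximalIdeal W)) :
    y ∈ tq k (maximalIdeal V) (maximalIdeal W) := by
  have : IsReduced ((V ⧸ maximalIdeal V) ⊗[k] (W ⧸ maximalIdeal W)) :=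
    isReduced_tensor_field k (ResidueField V) (ResidueField W)
  rw [mem_tq_iff] at hy2 ⊢
  rw [map_pow] at hy2
  exact eq_zero_of_pow_eq_zero hy2

open IsLocalRing in
theorem core_lemma [PerfectField k]
    [IsDomain V] [IsDomain W] [IsLocalRing V] [IsLocalRing W]
    (c : V) (d : W) (hc : c ≠ 0) (hd : d ≠ 0) (z : V ⊗[k] W)
    (h1 : z ∈ tq k (Ideal.span {c}) (maximalIdeal W * Ideal.span {d ^ 2}))
    (h2 : z ∈ tq k (maximalIdeal V * Ideal.span {c}) (Ideal.span {d}))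
    (h4 : z ^ 2 ∈ tq k (maximalIdeal V * Ideal.span {c ^ 2}) (maximalIdeal W * Ideal.span {d ^ 2})) :
    z ∈ tq k (maximalIdeal V * Ideal.span {c}) (maximalIdeal W * Ideal.span {d}) := by
  obtain ⟨p, hp, y1, hy1, rfl⟩ := tq_decomp _ _ _ h1
  obtain ⟨t, rfl⟩ := tq_span_left _ _ hp
  have hd2 : Ideal.span {d ^ 2} ≤ Ideal.span {d} :=
    Ideal.span_singleton_le_span_singleton.mpr (dvd_pow_self d two_ne_zero)
  have h2' : (c ⊗ₜ[k] (1 : W)) * t ∈ tq k (maximalIdeal V * Ideal.span {c}) (Ideal.span {d}) := by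
    have : y1 ∈ tq k (maximalIdeal V * Ideal.span {c}) (Ideal.span {d}) :=
      mem_tq_mono hy1 bot_le (Ideal.mul_le_right.trans hd2)
    have := Ideal.sub_mem _ h2 this
    rwa [add_sub_cancel_right] at this
  have h4' : ((c ⊗ₜ[k] (1 : W)) * t) ^ 2 ∈
      tq k (maximalIdeal V * Ideal.span {c ^ 2}) (maximalIdeal W * Ideal.span {d ^ 2}) := by
    have : y1 ∈ tq k (maximalIdeal V * Ideal.span {c ^ 2}) (maximalIdeal W * Ideal.span {d ^ 2}) :=
      mem_tq_mono hy1 bot_le le_rfl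
    have := Ideal.sub_mem _ h4 (Ideal.mul_mem_left _ (2 * ((c ⊗ₜ[k] (1 : W)) * t) + y1) this)
    have e : ((c ⊗ₜ[k] (1 : W)) * t + y1) ^ 2 - (2 * ((c ⊗ₜ[k] (1 : W)) * t) + y1) * y1 =
      ((c ⊗ₜ[k] (1 : W)) * t) ^ 2 := by ring
    rwa [e] at this
  have ht : t ∈ tq k (maximalIdeal V) (Ideal.span {d}) := by
    refine tq_cancel _ _ c 1 hc one_ne_zero t ?_
    rwa [Ideal.span_singleton_one, Ideal.mul_top]
  obtain ⟨u, hu, q, hq, rfl⟩ := tq_decomp _ _ _ ht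
  obtain ⟨y, rfl⟩ := tq_span_right _ _ hq
  have hcd2 : (c ^ 2) ⊗ₜ[k] (d ^ 2) = ((c ^ 2) ⊗ₜ[k] (1 : W)) * ((1 : V) ⊗ₜ[k] (d ^ 2)) := by simp
  have hc2 : (c ^ 2) ⊗ₜ[k] (1 : W) = (c ⊗ₜ[k] (1 : W)) ^ 2 := by
    simp [Algebra.TensorProduct.tmul_pow]
  have hdd2 : (1 : V) ⊗ₜ[k] (d ^ 2) = ((1 : V) ⊗ₜ[k] d) ^ 2 := by
    simp [Algebra.TensorProduct.tmul_pow]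
  have hy2 : y ^ 2 ∈ tq k (maximalIdeal V) (maximalIdeal W) := by
    refine tq_cancel _ _ (c ^ 2) (d ^ 2) (pow_ne_zero _ hc) (pow_ne_zero _ hd) _ ?_
    have := tq_mul_left _ (c ^ 2) (u * (u + 2 * (((1 : V) ⊗ₜ[k] d) * y)))
      (Ideal.mul_mem_right _ _ hu)
    have := Ideal.sub_mem _ h4' (mem_tq_mono this le_rfl bot_le)
    rw [hc2] at this
    rw [hcd2, hc2, hdd2]
    generalize c ⊗ₜ[k] (1 : W) = C at *
    generalize (1 : V) ⊗ₜ[k] d = D at *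
    have e : (C * (u + D * y)) ^ 2 - C ^ 2 * (u * (u + 2 * (D * y))) = C ^ 2 * D ^ 2 * y ^ 2 := by
      ring
    rwa [e] at this
  have hy := tq_max_reduced y hy2
  obtain ⟨yl, hyl, yr, hyr, rfl⟩ := tq_decomp _ _ _ hy
  have e1 := tq_mul_left _ c (u + ((1 : V) ⊗ₜ[k] d) * yl)
    (Ideal.add_mem _ hu (Ideal.mul_mem_left _ _ hyl))
  have e2 := Ideal.mul_mem_left _ (c ⊗ₜ[k] (1 : W)) (tq_mul_right _ d yr hyr)
  have e3 : y1 ∈ tq k ⊥ (maximalIdeal W * Ideal.span {d}) :=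
    mem_tq_mono hy1 le_rfl (Ideal.mul_mono_right hd2)
  have := Ideal.add_mem (tq k (maximalIdeal V * Ideal.span {c}) (maximalIdeal W * Ideal.span {d}))
    (mem_tq_mono e1 le_rfl bot_le) (mem_tq_mono (Ideal.add_mem _ e2 e3) bot_le le_rfl)
  generalize c ⊗ₜ[k] (1 : W) = C at *
  generalize (1 : V) ⊗ₜ[k] d = D at *
  have e : C * (u + D * yl) + (C * (D * yr) + y1) = C * (u + D * (yl + yr)) + y1 := by
    ring
  rwa [e] at this

end tq2

section jump

open IsLocalRing

variable {A V : Type*} [CommRing A] [IsNoetherianRing A] [IsLocalRing A]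
  [CommRing V] [IsDomain V] [ValuationRing V]

theorem mem_max_mul_span (x c : V) (hc : c ≠ 0) :
    x ∈ maximalIdeal V * Ideal.span {c} ↔ c ∣ x ∧ ¬ x ∣ c := by
  rw [Ideal.mem_mul_span_singleton]
  constructor
  · rintro ⟨y, hy, rfl⟩
    refine ⟨dvd_mul_left _ _, ?_⟩
    rintro ⟨w, hw⟩
    have : y * w = 1 := mul_right_cancel₀ hc (by linear_combination -hw)
    exact (mem_maximalIdeal y).mp hy (IsUnit.of_mul_eq_one _ this)
  · rintro ⟨⟨y, rfl⟩, h⟩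
    refine ⟨y, ?_, mul_comm _ _⟩
    rw [mem_maximalIdeal, mem_nonunits_iff]
    intro hy
    exact h (hy.mul_right_dvd.mpr dvd_rfl)

theorem jump_lemma (f : A →+* V) (a : A) (ha : f a ≠ 0)
    (N : ℕ) (hN : ∀ x ∈ maximalIdeal A ^ N, f a ∣ f x) (P : Ideal A → Prop) (hP : P ⊤)
    (hnP : ¬ P ((maximalIdeal V * Ideal.span {f a}).comap f)) :
    ∃ c : A, f c ∣ f a ∧ P ((Ideal.span {f c}).comap f) ∧
      ¬ P ((maximalIdeal V * Ideal.span {f c}).comap f) := by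
  by_contra hcon
  push Not at hcon
  let S : Set (Ideal A) := {I | ∃ c, f c ∣ f a ∧ I = (Ideal.span {f c}).comap f ∧ P I}
  have hS : S.Nonempty := by
    refine ⟨⊤, 1, by simp, ?_, hP⟩
    rw [map_one, Ideal.span_singleton_one, Ideal.comap_top]
  obtain ⟨J, ⟨c, hca, rfl, hPc⟩, hmin⟩ := dcc_above_pow N S hS (by
    rintro J ⟨c, hc, rfl, -⟩ x hx
    rw [Ideal.mem_comap, Ideal.mem_span_singleton]
    exact hc.trans (hN x hx))
  have hc0 : f c ≠ 0 := fun h => ha (by rw [h] at hca; exact zero_dvd_iff.mp hca)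
  have hPm := hcon c hca hPc
  by_cases hac : f a ∣ f c
  · apply hnP
    have : Ideal.span {f a} = Ideal.span {f c} :=
      le_antisymm (Ideal.span_singleton_le_span_singleton.mpr hca)
        (Ideal.span_singleton_le_span_singleton.mpr hac)
    rwa [this]
  let T : Set (Ideal A) := {I | ∃ c', f c' ∈ maximalIdeal V * Ideal.span {f c} ∧ f c' ∣ f a ∧
    I = (Ideal.span {f c'}).comap f}
  have hT : T.Nonempty := ⟨_, a, (mem_max_mul_span _ _ hc0).mpr ⟨hca, hac⟩, dvd_rfl, rfl⟩
  obtain ⟨I, ⟨c', hc'm, hc'a, rfl⟩, hmax⟩ := set_has_maximal_iff_noetherian.mpr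
    (inferInstance : IsNoetherian A A) T hT
  have heq : (Ideal.span {f c'}).comap f = (maximalIdeal V * Ideal.span {f c}).comap f := by
    apply le_antisymm
    · apply Ideal.comap_mono
      rwa [Ideal.span_singleton_le_iff_mem]
    · intro x hx
      rw [Ideal.mem_comap] at hx
      rw [Ideal.mem_comap, Ideal.mem_span_singleton]
      by_contra hnd
      have hd : f x ∣ f c' := (ValuationRing.dvd_total (f c') (f x)).resolve_left hnd
      refine hmax _ ⟨x, hx, hd.trans hc'a, rfl⟩ (lt_of_le_of_ne ?_ ?_)
      · exact Ideal.comap_mono (Ideal.span_singleton_le_span_singleton.mpr hd)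
      · intro h
        have : x ∈ (Ideal.span {f c'}).comap f := by
          rw [h, Ideal.mem_comap]
          exact Ideal.mem_span_singleton_self _
        rw [Ideal.mem_comap, Ideal.mem_span_singleton] at this
        exact hnd this
  have h1 := hmin _ ⟨c', hc'a, rfl, heq ▸ hPm⟩ (by
    apply Ideal.comap_mono
    rw [Ideal.span_singleton_le_span_singleton]
    exact ((mem_max_mul_span _ _ hc0).mp hc'm).1)
  have : c ∈ (Ideal.span {f c'}).comap f := by
    rw [h1, Ideal.mem_comap]
    exact Ideal.mem_span_singleton_self _
  rw [Ideal.mem_comap, Ideal.mem_span_singleton] at this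
  exact ((mem_max_mul_span _ _ hc0).mp hc'm).2 this

theorem open_lemma (f : A →+* V) [IsLocalHom f] (c : V)
    (N : ℕ) (hN : ∀ x ∈ maximalIdeal A ^ N, c ∣ f x) :
    maximalIdeal A ^ (N + 1) ≤ (maximalIdeal V * Ideal.span {c}).comap f := by
  rw [pow_succ, mul_comm, Ideal.mul_le]
  intro x hx y hy
  rw [Ideal.mem_comap, map_mul]
  refine Ideal.mul_mem_mul ?_ (Ideal.mem_span_singleton.mpr (hN y hy))
  rw [mem_maximalIdeal, mem_nonunits_iff] at hx ⊢
  exact fun h => hx (isUnit_of_map_unit f x h)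

theorem open_sq (f : A →+* V) (c : V)
    (N : ℕ) (hN : ∀ x ∈ maximalIdeal A ^ N, c ∣ f x) :
    ∀ x ∈ maximalIdeal A ^ (N + N), c ^ 2 ∣ f x := by
  have : maximalIdeal A ^ (N + N) ≤ (Ideal.span {c ^ 2}).comap f := by
    rw [pow_add, Ideal.mul_le]
    intro x hx y hy
    rw [Ideal.mem_comap, map_mul, Ideal.mem_span_singleton, sq]
    exact mul_dvd_mul (hN x hx) (hN y hy)
  intro x hx
  exact Ideal.mem_span_singleton.mp (this hx)

end jump

section radpow

open IsLocalRing

variable {k A B : Type*} [Field k] [CommRing A] [CommRing B]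
  [Algebra k A] [Algebra k B]

theorem tq_pow_le (I : Ideal A) (J : Ideal B) (M N : ℕ) :
    tq k I J ^ (M + N) ≤ tq k (I ^ M) (J ^ N) := by
  rw [tq, tq, Ideal.map_pow, Ideal.map_pow]
  exact Ideal.sup_pow_add_le_pow_sup_pow

theorem tq_pow_ge (I : Ideal A) (J : Ideal B) (M : ℕ) :
    tq k (I ^ M) (J ^ M) ≤ tq k I J ^ M := by
  rw [tq, tq, Ideal.map_pow, Ideal.map_pow]
  exact sup_le (Ideal.pow_right_mono le_sup_left M) (Ideal.pow_right_mono le_sup_right M)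

end radpow

section mainlemma

open IsLocalRing

variable {k A B V W : Type*} [Field k] [PerfectField k] [CommRing A] [CommRing B]
  [IsNoetherianRing A] [IsNoetherianRing B] [IsLocalRing A] [IsLocalRing B]
  [CommRing V] [CommRing W] [IsDomain V] [IsDomain W] [ValuationRing V] [ValuationRing W]
  [Algebra k A] [Algebra k B] [Algebra k V] [Algebra k W]

theorem main_lemma (f : A →ₐ[k] V) (g : B →ₐ[k] W) [IsLocalHom f.toRingHom]
    [IsLocalHom g.toRingHom] (a : A) (b : B) (ha : f a ≠ 0) (hb : g b ≠ 0)
    (haN : ∃ N : ℕ, ∀ x ∈ maximalIdeal A ^ N, f a ∣ f x)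
    (hbN : ∃ N : ℕ, ∀ x ∈ maximalIdeal B ^ N, g b ∣ g x)
    (z : ℕ → A ⊗[k] B) (hz : ∀ n, z n ^ 2 ∈ tq k (maximalIdeal A) (maximalIdeal B) ^ n) :
    ∀ᶠ n in Filter.atTop, z n ∈ tq k ((maximalIdeal V * Ideal.span {f a}).comap f.toRingHom)
      ((maximalIdeal W * Ideal.span {g b}).comap g.toRingHom) := by
  by_contra hcon
  obtain ⟨N, hN⟩ := haN
  let P1 : Ideal A → Prop := fun I => ∀ b' : B, g b' ≠ 0 →
    (∃ N : ℕ, ∀ x ∈ maximalIdeal B ^ N, g b' ∣ g x) →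
    ∀ᶠ n in Filter.atTop, z n ∈ tq k I ((maximalIdeal W * Ideal.span {g b'}).comap g.toRingHom)
  obtain ⟨c, hca, hc1, hc2⟩ := jump_lemma f.toRingHom a ha N hN P1
    (by
      intro b' _ _
      rw [tq_top_left]
      exact Filter.Eventually.of_forall fun _ => Submodule.mem_top)
    (fun h => hcon (h b hb hbN))
  simp only [P1, not_forall] at hc2
  obtain ⟨b1, hb1, ⟨N1, hN1⟩, hc2⟩ := hc2
  obtain ⟨d, hdb, hd1, hd2⟩ := jump_lemma g.toRingHom b1 hb1 N1 hN1
    (fun J => ∀ᶠ n in Filter.atTop,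
      z n ∈ tq k ((maximalIdeal V * Ideal.span {f.toRingHom c}).comap f.toRingHom) J)
    (by
      rw [tq_top_right]
      exact Filter.Eventually.of_forall fun _ => Submodule.mem_top) hc2
  have hNc : ∀ x ∈ maximalIdeal A ^ N, f c ∣ f x := fun x hx => hca.trans (hN x hx)
  have hNd : ∀ x ∈ maximalIdeal B ^ N1, g d ∣ g x := fun x hx => hdb.trans (hN1 x hx)
  have hc0 : f c ≠ 0 := fun h => ha (zero_dvd_iff.mp (h ▸ hca))
  have hd0 : g d ≠ 0 := fun h => hb1 (zero_dvd_iff.mp (h ▸ hdb))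
  have hNc2 := open_lemma f.toRingHom _ _ (open_sq f.toRingHom _ _ hNc)
  have hNd2' := open_sq g.toRingHom _ _ hNd
  have hNd2 := open_lemma g.toRingHom _ _ hNd2'
  apply hd2
  have h1 := hc1 (d ^ 2) (by rw [map_pow]; exact pow_ne_zero _ hd0)
    ⟨_, by rw [map_pow]; exact hNd2'⟩
  filter_upwards [h1, hd1, Filter.eventually_ge_atTop (N + N + 1 + (N1 + N1 + 1))] with n h1 h2 h3
  have h4 : z n ^ 2 ∈ tq k ((maximalIdeal V * Ideal.span {f c ^ 2}).comap f.toRingHom)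
      ((maximalIdeal W * Ideal.span {g d ^ 2}).comap g.toRingHom) :=
    mem_tq_mono (tq_pow_le _ _ _ _ (Ideal.pow_le_pow_right h3 (hz n))) hNc2 hNd2
  rw [map_pow] at h1
  have h1' := (mem_tq_comap f g _ _ _).mp h1
  have h2' := (mem_tq_comap f g _ _ _).mp h2
  have h4' := (mem_tq_comap f g _ _ _).mp h4
  rw [map_pow] at h4'
  exact (mem_tq_comap f g _ _ _).mpr (core_lemma _ _ hc0 hd0 _ h1' h2' h4')

end mainlemma

section final

open IsLocalRing

/-- The family of ideals of `A` cut out by local maps to valuation rings. -/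
def valFam (A : Type u) [CommRing A] [IsLocalRing A] : Set (Ideal A) :=
  {I | ∃ (V : Type u) (_ : CommRing V) (_ : IsDomain V) (_ : ValuationRing V) (f : A →+* V) (a : A),
    f a ≠ 0 ∧ IsLocalHom f ∧ (∃ N : ℕ, ∀ x ∈ maximalIdeal A ^ N, f a ∣ f x) ∧
      I = (maximalIdeal V * Ideal.span {f a}).comap f}

theorem valFam_sep (A : Type u) [CommRing A] [IsNoetherianRing A] [IsLocalRing A] [IsReduced A]
    (x : A) (hx : ∀ J ∈ valFam A, x ∈ J) : x = 0 := by
  by_contra hx0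
  obtain ⟨V, i1, i2, i3, f, h1, h2, h3⟩ := exists_valuationRing_map x hx0
  have := hx _ ⟨V, i1, i2, i3, f, x, h1, h2, h3, rfl⟩
  rw [Ideal.mem_comap] at this
  exact ((mem_max_mul_span _ _ h1).mp this).2 dvd_rfl

theorem eventually_mem {k : Type*} {A : Type u} {B : Type v} [Field k] [PerfectField k]
    [CommRing A] [CommRing B]
    [IsNoetherianRing A] [IsNoetherianRing B] [IsLocalRing A] [IsLocalRing B]
    [Algebra k A] [Algebra k B]
    (z : ℕ → A ⊗[k] B) (hz : ∀ n, z n ^ 2 ∈ tq k (maximalIdeal A) (maximalIdeal B) ^ n)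
    (I : Ideal A) (hI : I ∈ valFam A) (J : Ideal B) (hJ : J ∈ valFam B) :
    ∀ᶠ n in Filter.atTop, z n ∈ tq k I J := by
  obtain ⟨V, _, _, _, f, a, ha, hf, haN, rfl⟩ := hI
  obtain ⟨W, _, _, _, g, b, hb, hg, hbN, rfl⟩ := hJ
  let _ : Algebra k V := (f.comp (algebraMap k A)).toAlgebra
  let _ : Algebra k W := (g.comp (algebraMap k B)).toAlgebra
  let f' : A →ₐ[k] V := { f with commutes' := fun _ => rfl }
  let g' : B →ₐ[k] W := { g with commutes' := fun _ => rfl }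
  have : IsLocalHom f'.toRingHom := hf
  have : IsLocalHom g'.toRingHom := hg
  exact main_lemma f' g' a b ha hb haN hbN z hz

theorem exists_mem_pow {k : Type*} {A : Type u} {B : Type v} [Field k] [PerfectField k]
    [CommRing A] [CommRing B]
    [IsNoetherianRing A] [IsNoetherianRing B] [IsLocalRing A] [IsLocalRing B]
    [IsAdicComplete (maximalIdeal A) A] [IsAdicComplete (maximalIdeal B) B]
    [IsReduced A] [IsReduced B] [Algebra k A] [Algebra k B]
    (z : ℕ → A ⊗[k] B) (hz : ∀ n, z n ^ 2 ∈ tq k (maximalIdeal A) (maximalIdeal B) ^ n) (M : ℕ) :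
    ∀ᶠ n in Filter.atTop, z n ∈ tq k (maximalIdeal A) (maximalIdeal B) ^ M := by
  obtain ⟨S, hS, hSM⟩ := chevalley_ideals (valFam A) (valFam_sep A) M
  obtain ⟨T, hT, hTM⟩ := chevalley_ideals (valFam B) (valFam_sep B) M
  have : ∀ᶠ n in Filter.atTop, ∀ I ∈ S, ∀ J ∈ T, z n ∈ tq k I J := by
    rw [Filter.eventually_all_finset]
    intro I hI
    rw [Filter.eventually_all_finset]
    intro J hJ
    exact eventually_mem z hz I (hS hI) J (hT hJ)
  filter_upwards [this] with n hn
  exact tq_pow_ge _ _ _ (mem_tq_mono (tq_finset_inf S T _ hn) hSM hTM)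

end final

theorem isReduced_adicCompletion {R : Type*} [CommRing R] (I : Ideal R)
    (h : ∀ z : ℕ → R, (∀ n, z n ^ 2 ∈ I ^ n) → ∀ M, ∀ᶠ n in Filter.atTop, z n ∈ I ^ M) :
    IsReduced (AdicCompletion I R) := by
  have key : ∀ x : AdicCompletion I R, x ^ 2 = 0 → x = 0 := by
    intro x hx
    obtain ⟨z, rfl⟩ := AdicCompletion.mk_surjective I R x
    have hz : ∀ n, z n ^ 2 ∈ I ^ n := by
      intro n
      have := congrArg (AdicCompletion.evalₐ I n) hx
      rw [map_pow, AdicCompletion.evalₐ_mk, map_zero, ← map_pow,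
        Ideal.Quotient.eq_zero_iff_mem] at this
      exact this
    apply AdicCompletion.ext_evalₐ
    intro M
    obtain ⟨n, hn, hMn⟩ := ((h z hz M).and (Filter.eventually_ge_atTop M)).exists
    rw [AdicCompletion.evalₐ_mk, map_zero]
    exact (AdicCompletion.Ideal.mk_eq_mk I hMn z).symm.trans
      (Ideal.Quotient.eq_zero_iff_mem.mpr hn)
  exact (isReduced_iff_pow_one_lt 2 one_lt_two).mpr key

/-- **Statement 14.** Let `k` be a perfect field and `A` and `B` two complete Noetherian
local commutative rings containing `k` such that `A ⊗̂[k] B` is Noetherian. If `A` and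
`B` are reduced, then `A ⊗̂[k] B` is reduced. -/
theorem isReduced_completedTensor (k A B : Type*) [Field k] [PerfectField k]
    [CommRing A] [CommRing B] [IsNoetherianRing A] [IsNoetherianRing B]
    [IsLocalRing A] [IsLocalRing B]
    [IsAdicComplete (IsLocalRing.maximalIdeal A) A]
    [IsAdicComplete (IsLocalRing.maximalIdeal B) B]
    [Algebra k A] [Algebra k B]
    (hE : IsNoetherianRing (CompletedTensor k A B))
    (hA : IsReduced A) (hB : IsReduced B) :
    IsReduced (CompletedTensor k A B) := by
  have hr : tensorRadical k A B =
      tq k (IsLocalRing.maximalIdeal A) (IsLocalRing.maximalIdeal B) := by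
    rw [tensorRadical, tq, IsLocalRing.jacobson_eq_maximalIdeal ⊥ bot_ne_top,
      IsLocalRing.jacobson_eq_maximalIdeal ⊥ bot_ne_top]
  apply isReduced_adicCompletion
  rw [hr]
  exact exists_mem_pow
end

section
/- Let k be a field of characteristic p > 0 that is not perfect, let a ∈ k be an element that is not a p-th power in k, and let K = k[X]/(X^p − a). Let A = K[[Y_1,…,Y_m]] and B = K[[Y_1,…,Y_n]] be formal power series rings over K (m, n ≥ 0). Then the completed tensor product A⊗̂_k B is a Noetherian ring that is not reduced. -/
open TensorProduct

set_option synthInstance.maxHeartbeats 1000000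
set_option maxHeartbeats 2000000


theorem noeth_of_complete {S D σ : Type*} [CommRing S] [CommRing D] [Finite σ] [IsNoetherianRing S]
    (J : Ideal D) [IsAdicComplete J D] (x : σ → D) (hJ : J = Ideal.span (Set.range x))
    (g : S →+* D) (hg : Function.Surjective ((Ideal.Quotient.mk J).comp g)) :
    IsNoetherianRing D := by
  let : WithIdeal D := ⟨J⟩
  let : UniformSpace S := ⊥
  have : DiscreteTopology S := ⟨rfl⟩
  have : IsUniformAddGroup S := by infer_instance
  obtain ⟨_, _⟩ := (IsAdic.isAdicComplete_iff (R := D) (I := J) rfl).mp inferInstance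
  have hφ : Continuous g := continuous_of_discreteTopology
  have ha : MvPowerSeries.HasEval x := by
    refine ⟨fun s => WithIdeal.isTopologicallyNilpotent_of_mem ?_, ?_⟩
    · change x s ∈ J
      rw [hJ]; exact Ideal.subset_span ⟨s, rfl⟩
    · simp
  let F := MvPowerSeries.eval₂Hom hφ ha
  have hF : (Ideal.span (Set.range MvPowerSeries.X)).map F = J := by
    rw [hJ, Ideal.map_span, ← Set.range_comp]
    congr 2
    ext s
    simp [F, MvPowerSeries.coe_eval₂Hom]
  have hs : Function.Surjective F := by
    have : IsHausdorff ((Ideal.span (Set.range MvPowerSeries.X)).map F) D := by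
      rw [hF]; infer_instance
    apply surjective_of_mk_map_comp_surjective (I := Ideal.span (Set.range MvPowerSeries.X)) F
    rw [hF]
    intro y
    obtain ⟨s, rfl⟩ := hg y
    exact ⟨MvPowerSeries.C s, by simp [F, MvPowerSeries.coe_eval₂Hom]⟩
  exact isNoetherianRing_of_surjective _ _ F hs

theorem noeth_completion {S C σ : Type*} [CommRing S] [CommRing C] [Finite σ] [IsNoetherianRing S]
    (r : Ideal C) (x : σ → C) (hr : r = Ideal.span (Set.range x))
    (g : S →+* C) (hg : Function.Surjective ((Ideal.Quotient.mk r).comp g)) :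
    IsNoetherianRing (AdicCompletion r C) := by
  have fg : r.FG := by
    rw [hr]; exact ⟨(Set.finite_range x).toFinset, by simp⟩
  have := AdicCompletion.isAdicComplete_self r fg
  refine noeth_of_complete (r.map (algebraMap C (AdicCompletion r C)))
    (fun s => algebraMap C (AdicCompletion r C) (x s)) ?_
    ((algebraMap C (AdicCompletion r C)).comp g) ?_
  · have h : Ideal.map (algebraMap C (AdicCompletion r C)) (Ideal.span (Set.range x)) =
        Ideal.span (Set.range fun s => algebraMap C (AdicCompletion r C) (x s)) := by
      rw [Ideal.map_span, ← Set.range_comp]; rfl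
    exact (congrArg (Ideal.map (algebraMap C (AdicCompletion r C))) hr).trans h
  · intro y
    obtain ⟨y, rfl⟩ := Ideal.Quotient.mk_surjective y
    obtain ⟨s, hs⟩ := hg (AdicCompletion.evalOneₐ r y)
    refine ⟨s, ?_⟩
    simp only [RingHom.comp_apply] at hs ⊢
    rw [Ideal.Quotient.eq, ← AdicCompletion.ker_evalOneₐ_eq_map r fg, RingHom.mem_ker, map_sub,
      sub_eq_zero]
    exact hs

theorem mem_span_X {σ R : Type*} [Finite σ] [CommRing R] (f : MvPowerSeries σ R)
    (hf : MvPowerSeries.constantCoeff f = 0) :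
    f ∈ Ideal.span (Set.range (MvPowerSeries.X : σ → MvPowerSeries σ R)) := by
  classical
  let e := (MvPowerSeries.toAdicCompletionAlgEquiv σ R).toRingEquiv
  have h1 : Ideal.map e (Ideal.span (Set.range MvPowerSeries.X)) =
    (MvPolynomial.idealOfVars σ R).map (algebraMap ..) := by
    simp_rw [Ideal.map_span, ← Set.range_comp]
    congr 2; ext1
    simp [e, AdicCompletion.algebraMap_apply, ← MvPolynomial.coe_X,
      MvPowerSeries.toAdicCompletion_coe]
  have h2 : e f ∈ Ideal.map e (Ideal.span (Set.range MvPowerSeries.X)) := by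
    rw [h1, ← AdicCompletion.ker_evalOneₐ_eq_map _ (MvPolynomial.idealOfVars_fg σ R),
      RingHom.mem_ker]
    have : MvPowerSeries.truncTotal 1 f = 0 := by
      ext d
      by_cases hd : d.degree < 1
      · have : d = 0 := by
          rw [← Finsupp.degree_eq_zero_iff]; omega
        subst this
        rw [MvPowerSeries.coeff_truncTotal _ hd]
        simpa using hf
      · rw [MvPowerSeries.coeff_truncTotal_eq_zero _ (by omega)]
        simp
    change Ideal.Quotient.mk _ (MvPowerSeries.truncTotal 1 f) = 0
    rw [this, map_zero]
  rw [Ideal.mem_map_of_equiv] at h2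
  obtain ⟨y, hy, hye⟩ := h2
  rwa [← e.injective hye]

theorem jac_eq {σ K : Type*} [Finite σ] [Field K] :
    (⊥ : Ideal (MvPowerSeries σ K)).jacobson = Ideal.span (Set.range MvPowerSeries.X) := by
  rw [IsLocalRing.jacobson_eq_maximalIdeal _ bot_ne_top]
  apply le_antisymm
  · intro f hf
    apply mem_span_X
    by_contra h
    exact (IsLocalRing.mem_maximalIdeal _).mp hf
      (MvPowerSeries.isUnit_iff_constantCoeff.mpr (isUnit_iff_ne_zero.mpr h))
  · rw [Ideal.span_le]
    rintro _ ⟨s, rfl⟩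
    refine (IsLocalRing.mem_maximalIdeal _).mpr fun h => ?_
    simpa using MvPowerSeries.isUnit_iff_constantCoeff.mp h


section general

variable (k K : Type*) [Field k] [Field K] [Algebra k K] (σ τ : Type*)

/-- Constant power series, as a `k`-algebra map. -/
noncomputable def cHom : K →ₐ[k] MvPowerSeries σ K :=
  IsScalarTower.toAlgHom k K (MvPowerSeries σ K)

/-- Constant coefficient, as a `k`-algebra map. -/
noncomputable def ccHom : MvPowerSeries σ K →ₐ[k] K :=
  { MvPowerSeries.constantCoeff with
    commutes' := fun r => by
      rw [IsScalarTower.algebraMap_apply k K (MvPowerSeries σ K)]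
      exact MvPowerSeries.constantCoeff_C _ }

theorem ccHom_cHom (x : K) : ccHom k K σ (cHom k K σ x) = x :=
  MvPowerSeries.constantCoeff_C _

theorem ccHom_X (s : σ) : ccHom k K σ (MvPowerSeries.X s) = 0 :=
  MvPowerSeries.constantCoeff_X s

/-- Inclusion `K ⊗ K → A ⊗ B`. -/
noncomputable def incHom : K ⊗[k] K →ₐ[k] MvPowerSeries σ K ⊗[k] MvPowerSeries τ K :=
  Algebra.TensorProduct.map (cHom k K σ) (cHom k K τ)

/-- Retraction `A ⊗ B → K ⊗ K`. -/
noncomputable def retHom : MvPowerSeries σ K ⊗[k] MvPowerSeries τ K →ₐ[k] K ⊗[k] K :=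
  Algebra.TensorProduct.map (ccHom k K σ) (ccHom k K τ)

theorem retHom_incHom (x : K ⊗[k] K) : retHom k K σ τ (incHom k K σ τ x) = x := by
  induction x using TensorProduct.induction_on with
  | zero => simp
  | add x y hx hy => rw [map_add, map_add, hx, hy]
  | tmul x y => simp [retHom, incHom, ccHom_cHom]

variable [Finite σ] [Finite τ]

theorem tensorRadical_eq : tensorRadical k (MvPowerSeries σ K) (MvPowerSeries τ K) =
    Ideal.span (Set.range (Sum.elim
      (fun s : σ => (MvPowerSeries.X s ⊗ₜ[k] 1 : MvPowerSeries σ K ⊗[k] MvPowerSeries τ K))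
      (fun t : τ => 1 ⊗ₜ[k] MvPowerSeries.X t))) := by
  rw [tensorRadical, jac_eq, jac_eq, Ideal.map_span, Ideal.map_span, ← Ideal.span_union,
    Set.Sum.elim_range, ← Set.range_comp, ← Set.range_comp]
  rfl

theorem tensorRadical_le : tensorRadical k (MvPowerSeries σ K) (MvPowerSeries τ K) ≤
    RingHom.ker (retHom k K σ τ) := by
  rw [tensorRadical_eq, Ideal.span_le]
  rintro _ ⟨s | s, rfl⟩ <;> simp [RingHom.mem_ker, retHom, ccHom_X]

theorem sub_mem_tensorRadical (c : MvPowerSeries σ K ⊗[k] MvPowerSeries τ K) :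
    c - incHom k K σ τ (retHom k K σ τ c) ∈
      tensorRadical k (MvPowerSeries σ K) (MvPowerSeries τ K) := by
  induction c using TensorProduct.induction_on with
  | zero => simp
  | add x y hx hy =>
    have := Ideal.add_mem _ hx hy
    rw [map_add, map_add]
    convert this using 1
    ring
  | tmul f g =>
    have hf : f - cHom k K σ (ccHom k K σ f) ∈ (⊥ : Ideal (MvPowerSeries σ K)).jacobson := by
      rw [jac_eq]
      apply mem_span_X
      change ccHom k K σ _ = 0
      rw [map_sub, ccHom_cHom, sub_self]
    have hg : g - cHom k K τ (ccHom k K τ g) ∈ (⊥ : Ideal (MvPowerSeries τ K)).jacobson := by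
      rw [jac_eq]
      apply mem_span_X
      change ccHom k K τ _ = 0
      rw [map_sub, ccHom_cHom, sub_self]
    have h1 := Ideal.mem_sup_left (T := Ideal.map (Algebra.TensorProduct.includeRight (R := k)
      (A := MvPowerSeries σ K) (B := MvPowerSeries τ K)) ((⊥ : Ideal (MvPowerSeries τ K)).jacobson))
      (Ideal.mem_map_of_mem (Algebra.TensorProduct.includeLeft (R := k) (S := k)
      (A := MvPowerSeries σ K) (B := MvPowerSeries τ K)) hf)
    have h2 := Ideal.mem_sup_right (S := Ideal.map (Algebra.TensorProduct.includeLeft (R := k)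
      (S := k) (A := MvPowerSeries σ K) (B := MvPowerSeries τ K))
      ((⊥ : Ideal (MvPowerSeries σ K)).jacobson))
      (Ideal.mem_map_of_mem (Algebra.TensorProduct.includeRight (R := k)
      (A := MvPowerSeries σ K) (B := MvPowerSeries τ K)) hg)
    have h3 := Ideal.add_mem _ (Ideal.mul_mem_right (1 ⊗ₜ[k] g) _ h1)
      (Ideal.mul_mem_left _ (cHom k K σ (ccHom k K σ f) ⊗ₜ[k] 1) h2)
    rw [tensorRadical]
    convert h3 using 1
    simp [retHom, incHom, TensorProduct.tmul_sub, TensorProduct.sub_tmul, sub_mul, mul_sub]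

theorem noeth_general [Module.Finite k K] :
    IsNoetherianRing (CompletedTensor k (MvPowerSeries σ K) (MvPowerSeries τ K)) := by
  have : IsNoetherianRing (K ⊗[k] K) := IsNoetherianRing.of_finite k _
  refine noeth_completion _ _ (tensorRadical_eq k K σ τ) (incHom k K σ τ).toRingHom ?_
  intro y
  obtain ⟨c, rfl⟩ := Ideal.Quotient.mk_surjective y
  refine ⟨retHom k K σ τ c, ?_⟩
  symm
  exact Ideal.Quotient.eq.mpr (sub_mem_tensorRadical k K σ τ c)

theorem not_reduced_general (w : K ⊗[k] K) (hw : w ≠ 0) (p : ℕ) (hp : w ^ p = 0) :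
    ¬ IsReduced (CompletedTensor k (MvPowerSeries σ K) (MvPowerSeries τ K)) := by
  intro h
  let z := algebraMap _ (CompletedTensor k (MvPowerSeries σ K) (MvPowerSeries τ K))
    (incHom k K σ τ w)
  have hz : z = 0 := by
    apply h.eq_zero
    refine ⟨p, ?_⟩
    rw [← map_pow, ← map_pow, hp, map_zero, map_zero]
  have h1 : AdicCompletion.evalOneₐ _ z = 0 := by rw [hz, map_zero]
  have h2 : Ideal.Quotient.mk (tensorRadical k (MvPowerSeries σ K) (MvPowerSeries τ K))
    (incHom k K σ τ w) = 0 := h1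
  rw [Ideal.Quotient.eq_zero_iff_mem] at h2
  have h3 := tensorRadical_le k K σ τ h2
  rw [RingHom.mem_ker, retHom_incHom] at h3
  exact hw h3

theorem tmul_sub_ne_zero (x : K) (hx : ∀ b : k, algebraMap k K b ≠ x) :
    x ⊗ₜ[k] (1 : K) - 1 ⊗ₜ[k] x ≠ 0 := by
  intro h
  have hx' : x ∉ Submodule.span k {(1 : K)} := by
    intro hm
    obtain ⟨b, hb⟩ := Submodule.mem_span_singleton.mp hm
    exact hx b (by rw [← hb, Algebra.smul_def, mul_one])
  obtain ⟨f, hf, hf'⟩ := Submodule.exists_le_ker_of_notMem hx'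
  have h1 : f 1 = 0 := hf' (Submodule.mem_span_singleton_self 1)
  have := congrArg (fun t => TensorProduct.lid k K (f.rTensor K t)) h
  simp [h1] at this
  exact hf this

end general


/-- **Statement 16.** Let `k` be a field of characteristic `p > 0` that is not perfect,
`a ∈ k` an element that is not a `p`-th power, and `K = k[X] ⧸ (X^p - a)`. Let
`A = K[[Y_1, …, Y_m]]` and `B = K[[Y_1, …, Y_n]]`. Then `A ⊗̂[k] B` is Noetherian but
not reduced. -/
theorem not_isReduced_completedTensor_powerSeries (k : Type*) [Field k] (p : ℕ)
    [CharP k p] (hp : p ≠ 0) (a : k) (ha : ∀ b : k, b ^ p ≠ a) (m n : ℕ) :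
    IsNoetherianRing
        (CompletedTensor k
          (MvPowerSeries (Fin m) (AdjoinRoot (Polynomial.X ^ p - Polynomial.C a)))
          (MvPowerSeries (Fin n) (AdjoinRoot (Polynomial.X ^ p - Polynomial.C a)))) ∧
      ¬ IsReduced
        (CompletedTensor k
          (MvPowerSeries (Fin m) (AdjoinRoot (Polynomial.X ^ p - Polynomial.C a)))
          (MvPowerSeries (Fin n) (AdjoinRoot (Polynomial.X ^ p - Polynomial.C a)))) := by
  have hpp : p.Prime := (CharP.char_is_prime_or_zero k p).resolve_right hp
  have : Fact p.Prime := ⟨hpp⟩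
  have hirr : Irreducible (Polynomial.X ^ p - Polynomial.C a : Polynomial k) :=
    X_pow_sub_C_irreducible_of_prime hpp ha
  have : Fact (Irreducible (Polynomial.X ^ p - Polynomial.C a : Polynomial k)) := ⟨hirr⟩
  have : Module.Finite k (AdjoinRoot (Polynomial.X ^ p - Polynomial.C a : Polynomial k)) :=
    (Polynomial.monic_X_pow_sub_C a hp).finite_adjoinRoot
  refine ⟨noeth_general k (AdjoinRoot (Polynomial.X ^ p - Polynomial.C a)) (Fin m) (Fin n), ?_⟩
  set K := AdjoinRoot (Polynomial.X ^ p - Polynomial.C a : Polynomial k) with hK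
  let x : K := AdjoinRoot.root _
  have hx : x ^ p = algebraMap k K a := by
    have := AdjoinRoot.eval₂_root (Polynomial.X ^ p - Polynomial.C a : Polynomial k)
    rw [Polynomial.eval₂_sub, Polynomial.eval₂_X_pow, Polynomial.eval₂_C, sub_eq_zero] at this
    exact this
  refine not_reduced_general k K (Fin m) (Fin n) (x ⊗ₜ[k] 1 - 1 ⊗ₜ[k] x)
    (tmul_sub_ne_zero k K x ?_) p ?_
  · intro b hb
    apply ha b
    apply (algebraMap k K).injective
    rw [map_pow, hb, hx]
  · have : CharP (K ⊗[k] K) p :=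
      charP_of_injective_algebraMap (algebraMap k (K ⊗[k] K)).injective p
    rw [sub_pow_char, Algebra.TensorProduct.tmul_pow, Algebra.TensorProduct.tmul_pow, hx,
      one_pow, Algebra.TensorProduct.tmul_one_eq_one_tmul, sub_self]
end
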